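/- There exist absolute constants C, C′ > 0 such that the following holds. Let n ≥ 2, ε ∈ (0,1), fix X₀ ∈ S^{d−1}, let Q_t be an ORA walk of length t on ℝ^d with t ≥ C d (log d)(log n), and set X_t = Q_t X₀. Let k = ⌈C′ ε⁻² log n⌉, assume k ≤ d, and let S be a uniformly random subset of {1,…,d} of size k, independent of the walk. Then P[ Σ_{i∈S} X_t[i]² ∉ [(1−ε)k/d, (1+ε)k/d] ] ≤ n^{−3}. -/

import Mathlib

noncomputable section

open MeasureTheory Real
open scoped ENNReal

namespace KacJL

instance matrixMeasurableSpace {m n : Type*} : MeasurableSpace (Matrix m n ℝ) :=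
  inferInstanceAs (MeasurableSpace (m → n → ℝ))

/-- The rotation by angle `θ` in the `(i,j)` coordinate plane of `ℝ^d`. -/
def rotM (d : ℕ) (i j : Fin d) (θ : ℝ) : Matrix (Fin d) (Fin d) ℝ :=
  Matrix.of fun k l =>
    if k = i ∧ l = i then Real.cos θ
    else if k = i ∧ l = j then -Real.sin θ
    else if k = j ∧ l = i then Real.sin θ
    else if k = j ∧ l = j then Real.cos θ
    else if k = l then 1 else 0

/-- The uniform distribution on pairs of distinct coordinates in `Fin d`. -/
def pairUniform (d : ℕ) : Measure (Fin d × Fin d) :=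
  ((d * (d - 1) : ℕ) : ℝ≥0∞)⁻¹ •
    (Measure.count.restrict {p : Fin d × Fin d | p.1 ≠ p.2})

/-- The product `R_{i_T,j_T,π/4} ⋯ R_{i_1,j_1,π/4}` of ORA rotations determined by the
pairs `ω`. -/
def oraMatrix {d T : ℕ} (ω : Fin T → Fin d × Fin d) : Matrix (Fin d) (Fin d) ℝ :=
  ((List.ofFn fun t => rotM d (ω t).1 (ω t).2 (Real.pi / 4)).reverse).prod

instance finsetMeasurableSpace {α : Type*} : MeasurableSpace (Finset α) := ⊤

/-- The uniform distribution on `k`-element subsets of `Fin d`. -/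
def subsetUniform (d k : ℕ) : Measure (Finset (Fin d)) :=
  ((d.choose k : ℕ) : ℝ≥0∞)⁻¹ •
    (Measure.count.restrict {A : Finset (Fin d) | A.card = k})

/-!
Choosing a random subset amounts to permuting the coordinates at random and keeping the subset `S`
fixed, and random coordinate permutations commute with the steps of the walk. So everything reduces
to the expectation of symmetrized functions of `x = Q_t x₀`.

Cut the numbers `d * x i ^ 2`, whose mean is `1`, off at a height `M` of order `1 / ε`. If their
truncations have bounded mean square and their excesses over `M` have mean at most `ε / 2`, then
Bernstein's argument applies to the truncated sum over `S`, because sampling without replacement is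
dominated by sampling with replacement. By Jensen's and Markov's inequalities the two exceptional
events are controlled by the `P`-th moments, `P` of order `log n`, of the sums over `S` of the
squared truncations and of the excesses, hence by the symmetrized moments of even monomials in `x`.

One step of the walk turns such a monomial, up to AM-GM, into a positive combination of monomials of
the same degree. Weigh a monomial by the product over its variables of Gaussian-type moments and of
a factor `1 / 4` per variable occurring. Steps that spread one variable over two gain from the
factor `1 / 4`; steps that hit two variables at once are rare, the degree being small compared with
`d`. So on average a step multiplies the weight by at most `1 - 1 / (4 * d)`, and after
`4 * d * Q * log d` steps the moments of degree at most `2 * Q` are of Gaussian size, whatever the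
starting point. The weight does not contract at variables with exponent two, but by exchangeability
these can be eliminated with the help of `∑ i, x i ^ 2 = 1`.
-/

open Finset
open scoped BigOperators Nat

/-! ### Averaging over permutations of the coordinates -/

section PermMean

variable {ι β : Type*} [Fintype ι] [DecidableEq ι]

/-- The average of a function `f` of `x : ι → β` over all rearrangements `x ∘ σ` of `x`. Sampling a
uniformly random `k`-element subset amounts to evaluating this operator on a sum over one fixed
`k`-element subset. -/
def permMean : ((ι → β) → ℝ) →ₗ[ℝ] (ι → β) → ℝ where
  toFun f x := 𝔼 σ : Equiv.Perm ι, f (x ∘ σ)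
  map_add' _ _ := funext fun _ => expect_add_distrib _ _ _
  map_smul' _ _ := funext fun _ => (mul_expect _ _ _).symm

lemma permMean_apply (f : (ι → β) → ℝ) (x : ι → β) :
    permMean f x = 𝔼 σ : Equiv.Perm ι, f (x ∘ σ) := rfl

lemma permMean_mono {f g : (ι → β) → ℝ} {x : ι → β}
    (h : ∀ σ : Equiv.Perm ι, f (x ∘ σ) ≤ g (x ∘ σ)) : permMean f x ≤ permMean g x :=
  expect_le_expect fun σ _ => h σ

lemma permMean_nonneg {f : (ι → β) → ℝ} {x : ι → β} (h : ∀ σ : Equiv.Perm ι, 0 ≤ f (x ∘ σ)) :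
    0 ≤ permMean f x :=
  expect_nonneg fun σ _ => h σ

lemma permMean_of_invariant {f : (ι → β) → ℝ} {x : ι → β}
    (h : ∀ σ : Equiv.Perm ι, f (x ∘ σ) = f x) : permMean f x = f x := by
  simp [permMean_apply, h]

lemma permMean_mul_of_invariant {g : (ι → β) → ℝ} {x : ι → β}
    (hg : ∀ σ : Equiv.Perm ι, g (x ∘ σ) = g x) (f : (ι → β) → ℝ) :
    permMean (fun y => g y * f y) x = g x * permMean f x := by
  simp [permMean_apply, hg, mul_expect]

lemma permMean_smul (c : ℝ) (f : (ι → β) → ℝ) (x : ι → β) :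
    permMean (fun y => c * f y) x = c * permMean f x :=
  permMean_mul_of_invariant (g := fun _ => c) (fun _ => rfl) f

lemma permMean_comp_perm (f : (ι → β) → ℝ) (τ : Equiv.Perm ι) (x : ι → β) :
    permMean (fun y => f (y ∘ τ)) x = permMean f x :=
  Fintype.expect_equiv (Equiv.mulRight τ) _ _ fun _ => rfl

lemma permMean_eval (x : ι → ℝ) (i : ι) : permMean (fun y => y i) x = 𝔼 j, x j := by
  have : Nonempty ι := ⟨i⟩
  have eval_eq (j : ι) : permMean (fun y : ι → ℝ => y j) x = permMean (fun y => y i) x := by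
    simpa using permMean_comp_perm (fun y : ι → ℝ => y i) (Equiv.swap i j) x
  calc permMean (fun y => y i) x = 𝔼 j, permMean (fun y => y j) x := by simp [eval_eq]
    _ = 𝔼 σ : Equiv.Perm ι, 𝔼 j, x (σ j) := expect_comm _ _ _
    _ = 𝔼 j, x j := by
      rw [← Fintype.expect_const (ι := Equiv.Perm ι) (𝔼 j, x j)]
      exact expect_congr rfl fun σ _ => Fintype.expect_equiv σ _ _ fun _ => rfl

lemma permMean_sum_eval (x : ι → ℝ) (S : Finset ι) :
    permMean (fun y => ∑ i ∈ S, y i) x = #S * 𝔼 i, x i := by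
  rw [permMean_apply, expect_sum_comm]
  exact (sum_congr rfl fun i _ => permMean_eval x i).trans (by simp)

lemma permMean_prod_mul_eval_congr (g : ι → β → ℝ) (f : β → ℝ) {S : Finset ι} {i j : ι} (hi : i ∉ S)
    (hj : j ∉ S) (x : ι → β) :
    permMean (fun y => (∏ l ∈ S, g l (y l)) * f (y i)) x =
      permMean (fun y => (∏ l ∈ S, g l (y l)) * f (y j)) x := by
  rw [← permMean_comp_perm (fun y => (∏ l ∈ S, g l (y l)) * f (y j)) (Equiv.swap i j)]
  have swap_prod (y : ι → β) : ∏ l ∈ S, g l (y (Equiv.swap i j l)) = ∏ l ∈ S, g l (y l) :=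
    prod_congr rfl fun l hl => congrArg (g l ∘ y) (Equiv.swap_apply_of_ne_of_ne
      (ne_of_mem_of_not_mem hl hi) (ne_of_mem_of_not_mem hl hj))
  simp only [Function.comp_apply, swap_prod, Equiv.swap_apply_right]

/-- Symmetrizing over the transposition of `i` and `j` turns the difference of the two sides into
`∏ l ∈ T, y l` times half the square `(y i - y j) ^ 2`. -/
lemma permMean_prod_mul_mul_le {x : ι → ℝ} (hx : 0 ≤ x) {T : Finset ι} {i j : ι} (hi : i ∉ T)
    (hj : j ∉ T) :
    permMean (fun y => (∏ l ∈ T, y l) * (y i * y j)) x ≤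
      permMean (fun y => (∏ l ∈ T, y l) * y i ^ 2) x := by
  have amgm : permMean (fun y => 2 * ((∏ l ∈ T, y l) * (y i * y j))) x ≤
      permMean ((fun y => (∏ l ∈ T, y l) * y i ^ 2) + fun y => (∏ l ∈ T, y l) * y j ^ 2) x := by
    refine permMean_mono fun σ => ?_
    have hT : 0 ≤ ∏ l ∈ T, (x ∘ σ) l := prod_nonneg fun l _ => hx (σ l)
    simp only [Pi.add_apply]
    nlinarith [mul_nonneg hT (sq_nonneg ((x ∘ σ) i - (x ∘ σ) j))]
  rw [map_add, permMean_smul, Pi.add_apply,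
    permMean_prod_mul_eval_congr (fun _ r => r) (fun r => r ^ 2) hj hi] at amgm
  linarith

lemma permMean_prod_mul_le_of_notMem {x : ι → ℝ} (hx : 0 ≤ x) {S : Finset ι} {j : ι} (hj : j ∉ S)
    (i : ι) :
    permMean (fun y => (∏ l ∈ S, y l) * y j) x ≤ permMean (fun y => (∏ l ∈ S, y l) * y i) x := by
  by_cases hi : i ∈ S
  · have split (y : ι → ℝ) : ∏ l ∈ S, y l = (∏ l ∈ S.erase i, y l) * y i :=
      (prod_erase_mul _ _ hi).symm
    simpa only [split, mul_assoc, ← sq] using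
      permMean_prod_mul_mul_le hx (notMem_erase i S) fun h => hj (mem_of_mem_erase h)
  · exact (permMean_prod_mul_eval_congr (fun _ r => r) id hj hi x).le

lemma permMean_prod_mul_le {x : ι → ℝ} (hx : 0 ≤ x) {S : Finset ι} {j : ι} (hj : j ∉ S) :
    permMean (fun y => (∏ l ∈ S, y l) * y j) x ≤
      (𝔼 i, x i) * permMean (fun y => ∏ l ∈ S, y l) x := by
  calc permMean (fun y => (∏ l ∈ S, y l) * y j) x
      ≤ 𝔼 i, permMean (fun y => (∏ l ∈ S, y l) * y i) x :=
        le_expect ⟨j, mem_univ j⟩ fun i _ => permMean_prod_mul_le_of_notMem hx hj i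
    _ = permMean (fun y => (𝔼 i, y i) * ∏ l ∈ S, y l) x := by
        simp only [permMean_apply, mul_comm _ (S.prod _), mul_expect]
        exact expect_comm _ _ _
    _ = _ := permMean_mul_of_invariant (fun σ => Fintype.expect_equiv σ _ _ fun _ => rfl) _

/-- Maclaurin's inequality between an elementary symmetric mean and the power of the mean. -/
lemma permMean_prod_le_mean_pow {x : ι → ℝ} (hx : 0 ≤ x) (S : Finset ι) :
    permMean (fun y => ∏ l ∈ S, y l) x ≤ (𝔼 i, x i) ^ #S := by
  induction S using Finset.induction_on with
  | empty => exact (permMean_of_invariant fun _ => by simp).trans_le (by simp)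
  | insert j S hj ih =>
    simp only [prod_insert hj, card_insert_of_notMem hj, mul_comm (_ : ℝ) (S.prod _)]
    rw [pow_succ']
    exact (permMean_prod_mul_le hx hj).trans
      (mul_le_mul_of_nonneg_left ih (expect_nonneg fun i _ => hx i))

lemma mean_pow_le_permMean_sum_pow {x : ι → ℝ} (hx : 0 ≤ x) (S : Finset ι) (P : ℕ) :
    (#S * 𝔼 i, x i) ^ P ≤ permMean (fun y => (∑ i ∈ S, y i) ^ P) x := by
  rw [← permMean_sum_eval x S, permMean_apply, permMean_apply]
  simp only [Fintype.expect_eq_sum_div_card, div_eq_inv_mul,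
    mul_sum (univ : Finset (Equiv.Perm ι))]
  exact Real.pow_arith_mean_le_arith_mean_pow univ
    (fun _ : Equiv.Perm ι => (Fintype.card (Equiv.Perm ι) : ℝ)⁻¹)
    (fun σ => ∑ i ∈ S, (x ∘ σ) i) (fun _ _ => by positivity) (by simp)
    (fun σ _ => sum_nonneg fun i _ => hx (σ i)) P

/-- Maclaurin's inequality lets sampling without replacement inherit the exponential moments of
sampling with replacement. -/
lemma permMean_exp_sum_le {u : ι → ℝ} (hu : ∀ i, |u i| ≤ 1) (S : Finset ι) :
    permMean (fun y => exp (∑ i ∈ S, y i)) u ≤ exp (#S * (𝔼 i, u i + 𝔼 i, u i ^ 2)) := by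
  rcases isEmpty_or_nonempty ι with hι | hι
  · simp [permMean_apply, S.eq_empty_of_isEmpty]
  have exp_le (i : ι) : exp (u i) ≤ 1 + (u i + u i ^ 2) := by
    linarith [le_abs_self (exp (u i) - 1 - u i), Real.abs_exp_sub_one_sub_id_le (hu i)]
  have mean_exp_le : 𝔼 i, exp (u i) ≤ exp (𝔼 i, u i + 𝔼 i, u i ^ 2) :=
    calc 𝔼 i, exp (u i) ≤ 𝔼 i, (1 + (u i + u i ^ 2)) := expect_le_expect fun i _ => exp_le i
      _ = (𝔼 i, u i + 𝔼 i, u i ^ 2) + 1 := by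
        rw [expect_add_distrib, expect_add_distrib, Fintype.expect_const, add_comm]
      _ ≤ _ := add_one_le_exp _
  calc permMean (fun y => exp (∑ i ∈ S, y i)) u
      = permMean (fun y => ∏ i ∈ S, y i) (fun i => exp (u i)) := by
        simp only [permMean_apply, exp_sum, Function.comp_apply]
    _ ≤ (𝔼 i, exp (u i)) ^ #S := permMean_prod_le_mean_pow (fun _ => (exp_pos _).le) S
    _ ≤ exp (𝔼 i, u i + 𝔼 i, u i ^ 2) ^ #S :=
        pow_le_pow_left₀ (expect_nonneg fun _ _ => (exp_pos _).le) mean_exp_le _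
    _ = _ := (exp_nat_mul _ _).symm

lemma permMean_indicator_le_exp {u : ι → ℝ} (hu : ∀ i, |u i| ≤ 1) (S : Finset ι) (c : ℝ) :
    permMean ({y | c ≤ ∑ i ∈ S, y i}.indicator 1) u ≤
      exp (#S * (𝔼 i, u i + 𝔼 i, u i ^ 2) - c) := by
  have markov (y : ι → ℝ) :
      {y | c ≤ ∑ i ∈ S, y i}.indicator (1 : (ι → ℝ) → ℝ) y ≤ exp (-c) * exp (∑ i ∈ S, y i) := by
    refine Set.indicator_apply_le' (fun hy => ?_) fun _ => by positivity
    rw [← exp_add, Pi.one_apply, one_le_exp_iff]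
    linarith [show c ≤ ∑ i ∈ S, y i from hy]
  calc permMean ({y | c ≤ ∑ i ∈ S, y i}.indicator 1) u
      ≤ exp (-c) * permMean (fun y => exp (∑ i ∈ S, y i)) u :=
        (permMean_mono fun σ => markov (u ∘ σ)).trans_eq (permMean_smul _ _ _)
    _ ≤ exp (-c) * exp (#S * (𝔼 i, u i + 𝔼 i, u i ^ 2)) := by
        gcongr
        exact permMean_exp_sum_le hu S
    _ = _ := by rw [← exp_add, neg_add_eq_sub]

end PermMean

/-! ### Deviations of a sum over a random subset -/

section Deviation

lemma min_add_max_sub_zero (a M : ℝ) : min a M + max (a - M) 0 = a :=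
  eq_sub_iff_add_eq.1 (inf_eq_sub_posPart_sub a M)

variable {ι : Type*}

lemma sum_min_or_sum_excess_of_sum_notMem_Icc {y : ι → ℝ} {S : Finset ι} {ε M m : ℝ}
    (hm : 1 - ε / 2 ≤ m) (hm' : m ≤ 1)
    (hy : ∑ i ∈ S, y i ∉ Set.Icc ((1 - ε) * #S) ((1 + ε) * #S)) :
    #S * (m + ε / 2) ≤ ∑ i ∈ S, min (y i) M ∨ #S * (-m + ε / 2) ≤ ∑ i ∈ S, -min (y i) M ∨
      #S * (ε / 2) ≤ ∑ i ∈ S, max (y i - M) 0 := by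
  have excess_nonneg : 0 ≤ ∑ i ∈ S, max (y i - M) 0 := sum_nonneg fun i _ => le_max_right _ _
  have decomposition : ∑ i ∈ S, y i = ∑ i ∈ S, min (y i) M + ∑ i ∈ S, max (y i - M) 0 := by
    simp only [← sum_add_distrib, min_add_max_sub_zero]
  rw [sum_neg_distrib]
  by_contra! ⟨upper, lower, excess⟩
  exact hy ⟨by nlinarith, by nlinarith⟩

lemma indicator_sum_notMem_Icc_le {S : Finset ι} (hS : S.Nonempty) {ε M m : ℝ} (hε : 0 < ε)
    (hm : 1 - ε / 2 ≤ m) (hm' : m ≤ 1) (P : ℕ) (y : ι → ℝ) :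
    {y : ι → ℝ | ∑ i ∈ S, y i ∉ Set.Icc ((1 - ε) * #S) ((1 + ε) * #S)}.indicator
        (1 : (ι → ℝ) → ℝ) y ≤
      {v | #S * (m + ε / 2) ≤ ∑ i ∈ S, v i}.indicator (1 : (ι → ℝ) → ℝ) (fun i => min (y i) M) +
      {v | #S * (-m + ε / 2) ≤ ∑ i ∈ S, v i}.indicator (1 : (ι → ℝ) → ℝ)
        (fun i => -min (y i) M) +
      ((∑ i ∈ S, max (y i - M) 0) / (#S * (ε / 2))) ^ P := by
  have : (0 : ℝ) < #S := by exact_mod_cast hS.card_pos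
  have excess_nonneg : 0 ≤ ((∑ i ∈ S, max (y i - M) 0) / (#S * (ε / 2))) ^ P := by positivity
  have indicator_nonneg (A : Set (ι → ℝ)) (v : ι → ℝ) : 0 ≤ A.indicator (1 : (ι → ℝ) → ℝ) v :=
    Set.indicator_nonneg (fun _ _ => zero_le_one) v
  have indicator_eq_one {A : Set (ι → ℝ)} {v : ι → ℝ} (hv : v ∈ A) :
      A.indicator (1 : (ι → ℝ) → ℝ) v = 1 := Set.indicator_of_mem hv _
  refine Set.indicator_apply_le' (fun hy => ?_) fun _ =>
    add_nonneg (add_nonneg (indicator_nonneg _ _) (indicator_nonneg _ _)) excess_nonneg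
  rcases sum_min_or_sum_excess_of_sum_notMem_Icc hm hm' hy with upper | lower | excess
  · rw [indicator_eq_one (by exact upper), Pi.one_apply, add_assoc]
    exact le_add_of_nonneg_right (add_nonneg (indicator_nonneg _ _) excess_nonneg)
  · rw [indicator_eq_one (v := fun i => -min (y i) M) (by exact lower), Pi.one_apply,
      add_right_comm]
    exact le_add_of_nonneg_left (add_nonneg (indicator_nonneg _ _) excess_nonneg)
  · exact (one_le_pow₀ ((one_le_div (by positivity)).2 excess)).trans
      (le_add_of_nonneg_left (add_nonneg (indicator_nonneg _ _) (indicator_nonneg _ _)))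

variable [Fintype ι] [DecidableEq ι]

lemma permMean_indicator_mean_add_le {u : ι → ℝ} {M K ε : ℝ} (hu : ∀ i, |u i| ≤ M)
    (hK : 0 < K) (hV : 𝔼 i, u i ^ 2 ≤ K) (hε : 0 < ε) (hεM : ε * M ≤ 4 * K) (S : Finset ι) :
    permMean ({y | #S * (𝔼 i, u i + ε / 2) ≤ ∑ i ∈ S, y i}.indicator 1) u ≤
      exp (-(#S * ε ^ 2 / (16 * K))) := by
  set m := 𝔼 i, u i with hm
  set s := ε / (4 * K) with hs
  have hs_pos : 0 < s := by positivity
  have scaled_le_one (i : ι) : |s * u i| ≤ 1 := by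
    rw [abs_mul, abs_of_pos hs_pos, hs, div_mul_eq_mul_div, div_le_one (by positivity)]
    exact (mul_le_mul_of_nonneg_left (hu i) hε.le).trans hεM
  have rescale : permMean ({y | #S * (m + ε / 2) ≤ ∑ i ∈ S, y i}.indicator 1) u =
      permMean ({y | s * (#S * (m + ε / 2)) ≤ ∑ i ∈ S, y i}.indicator 1) (fun i => s * u i) := by
    refine expect_congr rfl fun σ _ => ?_
    simp only [Set.indicator_apply, Set.mem_ofPred_eq, Function.comp_apply, ← mul_sum,
      mul_le_mul_iff_right₀ hs_pos, Pi.one_apply]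
  rw [rescale]
  refine (permMean_indicator_le_exp scaled_le_one S _).trans (exp_le_exp.mpr ?_)
  have hV' : s ^ 2 * 𝔼 i, u i ^ 2 ≤ s * (ε / 4) := by
    calc s ^ 2 * 𝔼 i, u i ^ 2 ≤ s ^ 2 * K := by gcongr
      _ = s * (ε / 4) := by rw [hs]; field_simp
  calc (#S : ℝ) * (𝔼 i, s * u i + 𝔼 i, (s * u i) ^ 2) - s * (#S * (m + ε / 2))
      = #S * (s ^ 2 * 𝔼 i, u i ^ 2 - s * (ε / 2)) := by
        simp only [mul_pow, ← mul_expect, ← hm]; ring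
    _ ≤ #S * (s * (ε / 4) - s * (ε / 2)) := by gcongr
    _ = -(#S * ε ^ 2 / (16 * K)) := by rw [hs]; field_simp; ring

lemma one_le_permMean_sum_pow {u : ι → ℝ} (hu : 0 ≤ u) {S : Finset ι} (hS : S.Nonempty) {c : ℝ}
    (hc : 0 < c) (hcu : c ≤ 𝔼 i, u i) (P : ℕ) :
    1 ≤ permMean (fun y => ((∑ i ∈ S, y i) / (#S * c)) ^ P) u := by
  have card_pos : (0 : ℝ) < #S := by exact_mod_cast hS.card_pos
  have h := mean_pow_le_permMean_sum_pow (x := fun i => u i / (#S * c))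
    (fun i => div_nonneg (hu i) (by positivity)) S P
  have one_le_mean : 1 ≤ #S * 𝔼 i, u i / (#S * c) := by
    rwa [← expect_div, mul_div_assoc', mul_div_mul_left _ _ card_pos.ne', one_le_div hc]
  simp only [sum_div]
  exact (one_le_pow₀ one_le_mean).trans h

/-- The values `z i` are cut off at height `M`: the cutoff part has a bounded second moment and
concentrates by Bernstein's inequality, and the excess over `M` is handled by its moments. -/
lemma permMean_indicator_sum_notMem_Icc_le_of_mean_le {z : ι → ℝ} (hz : 0 ≤ z)
    (hz_mean : 𝔼 i, z i = 1) {S : Finset ι} (hS : S.Nonempty) {ε M K : ℝ} (hε : 0 < ε)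
    (hM : 0 ≤ M) (hK : 0 < K) (hεM : ε * M ≤ 4 * K) (hV : 𝔼 i, min (z i) M ^ 2 ≤ K)
    (hb : 𝔼 i, max (z i - M) 0 ≤ ε / 2) (P : ℕ) :
    permMean ({y | ∑ i ∈ S, y i ∉ Set.Icc ((1 - ε) * #S) ((1 + ε) * #S)}.indicator 1) z ≤
      2 * exp (-(#S * ε ^ 2 / (16 * K))) +
      permMean (fun y => ((∑ i ∈ S, max (y i - M) 0) / (#S * (ε / 2))) ^ P) z := by
  have mean_min_add : 𝔼 i, min (z i) M + 𝔼 i, max (z i - M) 0 = 1 := by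
    simp only [← expect_add_distrib, min_add_max_sub_zero, hz_mean]
  have excess_nonneg : 0 ≤ 𝔼 i, max (z i - M) 0 := expect_nonneg fun i _ => le_max_right _ _
  have abs_min_le (i : ι) : |min (z i) M| ≤ M := by
    rw [abs_of_nonneg (le_min (hz i) hM)]
    exact min_le_right _ _
  have upper := permMean_indicator_mean_add_le abs_min_le hK hV hε hεM S
  have lower := permMean_indicator_mean_add_le (u := fun i => -min (z i) M)
    (by simpa only [abs_neg] using abs_min_le) hK (by simpa only [neg_sq] using hV) hε hεM S
  rw [expect_neg_distrib] at lower
  have union_bound := expect_le_expect (s := (univ : Finset (Equiv.Perm ι))) fun σ _ =>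
    indicator_sum_notMem_Icc_le hS (M := M) (m := 𝔼 i, min (z i) M) hε (by linarith)
      (by linarith) P (z ∘ σ)
  simp only [expect_add_distrib] at union_bound
  refine union_bound.trans ?_
  rw [two_mul]
  exact add_le_add_left (add_le_add upper lower) _

/-- When one of the two means is too large, Jensen's inequality makes the corresponding moment at
least `1`. -/
lemma permMean_indicator_sum_notMem_Icc_le {z : ι → ℝ} (hz : 0 ≤ z) (hz_mean : 𝔼 i, z i = 1)
    {S : Finset ι} (hS : S.Nonempty) {ε M K : ℝ} (hε : 0 < ε) (hM : 0 ≤ M) (hK : 0 < K)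
    (hεM : ε * M ≤ 4 * K) (P : ℕ) :
    permMean ({y | ∑ i ∈ S, y i ∉ Set.Icc ((1 - ε) * #S) ((1 + ε) * #S)}.indicator 1) z ≤
      2 * exp (-(#S * ε ^ 2 / (16 * K))) +
      permMean (fun y => ((∑ i ∈ S, min (y i) M ^ 2) / (#S * K)) ^ P) z +
      permMean (fun y => ((∑ i ∈ S, max (y i - M) 0) / (#S * (ε / 2))) ^ P) z := by
  have tail_pos := exp_pos (-(#S * ε ^ 2 / (16 * K)))
  have second_moment_nonneg :
      0 ≤ permMean (fun y => ((∑ i ∈ S, min (y i) M ^ 2) / (#S * K)) ^ P) z :=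
    permMean_nonneg fun σ => by positivity
  have excess_nonneg :
      0 ≤ permMean (fun y => ((∑ i ∈ S, max (y i - M) 0) / (#S * (ε / 2))) ^ P) z :=
    permMean_nonneg fun σ => by positivity
  have indicator_le_one :
      permMean ({y | ∑ i ∈ S, y i ∉ Set.Icc ((1 - ε) * #S) ((1 + ε) * #S)}.indicator 1) z ≤ 1 :=
    expect_le univ_nonempty fun σ _ =>
      Set.indicator_apply_le' (fun _ => le_rfl) fun _ => zero_le_one
  rcases lt_or_ge K (𝔼 i, min (z i) M ^ 2) with hV | hV
  · have : 1 ≤ permMean (fun y => ((∑ i ∈ S, min (y i) M ^ 2) / (#S * K)) ^ P) z :=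
      one_le_permMean_sum_pow (u := fun i => min (z i) M ^ 2) (fun i => sq_nonneg _) hS hK hV.le P
    linarith
  rcases lt_or_ge (ε / 2) (𝔼 i, max (z i - M) 0) with hb | hb
  · have : 1 ≤ permMean (fun y => ((∑ i ∈ S, max (y i - M) 0) / (#S * (ε / 2))) ^ P) z :=
      one_le_permMean_sum_pow (u := fun i => max (z i - M) 0) (fun i => le_max_right _ _) hS
        (half_pos hε) hb.le P
    linarith
  · have := permMean_indicator_sum_notMem_Icc_le_of_mean_le hz hz_mean hS hε hM hK hεM hV hb P
    linarith

end Deviation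

/-! ### Odd double factorials and site weights -/

section SiteWeight

/-- The product `1 * 3 * ⋯ * (2 * p - 1)`, the `2p`-th moment of a standard Gaussian; it is `1` for
`p = 0`, where the subtraction truncates. -/
def oddFactorial (p : ℕ) : ℝ := ((2 * p - 1)‼ : ℕ)

@[simp] lemma oddFactorial_zero : oddFactorial 0 = 1 := by simp [oddFactorial]

lemma oddFactorial_succ (p : ℕ) : oddFactorial (p + 1) = (2 * p + 1) * oddFactorial p := by
  simp only [oddFactorial, show 2 * (p + 1) - 1 = 2 * p + 1 by lia, Nat.doubleFactorial_add_one]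
  push_cast
  rfl

lemma oddFactorial_pos (p : ℕ) : 0 < oddFactorial p :=
  Nat.cast_pos.2 (Nat.doubleFactorial_pos _)

lemma one_le_oddFactorial (p : ℕ) : 1 ≤ oddFactorial p :=
  Nat.one_le_cast.2 (Nat.doubleFactorial_pos _)

lemma oddFactorial_le (p : ℕ) : oddFactorial p ≤ 2 ^ p * p ! := by
  induction p with
  | zero => simp
  | succ p ih =>
    calc oddFactorial (p + 1) = (2 * p + 1) * oddFactorial p := oddFactorial_succ p
      _ ≤ (2 * p + 2) * (2 ^ p * p !) :=
        mul_le_mul (by linarith) ih (oddFactorial_pos p).le (by positivity)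
      _ = 2 ^ (p + 1) * (p + 1)! := by rw [Nat.factorial_succ]; push_cast; ring

lemma factorial_two_mul_eq (p : ℕ) : ((2 * p)! : ℝ) = 2 ^ p * p ! * oddFactorial p := by
  induction p with
  | zero => simp
  | succ p ih =>
    rw [show 2 * (p + 1) = 2 * p + 1 + 1 by ring, Nat.factorial_succ, Nat.factorial_succ,
      Nat.factorial_succ, oddFactorial_succ]
    push_cast
    rw [ih]
    ring

lemma choose_two_mul_mul_oddFactorial (a b : ℕ) :
    ((2 * (a + b)).choose (2 * a) : ℝ) * (oddFactorial a * oddFactorial b) =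
      (a + b).choose a * oddFactorial (a + b) := by
  have choose_eq := Nat.add_choose_mul_factorial_mul_factorial a b
  have choose_two_mul_eq := Nat.add_choose_mul_factorial_mul_factorial (2 * a) (2 * b)
  rw [← Nat.choose_symm_add] at choose_eq choose_two_mul_eq
  rw [← mul_add] at choose_two_mul_eq
  rify at choose_eq choose_two_mul_eq
  simp only [factorial_two_mul_eq, ← choose_eq] at choose_two_mul_eq
  have hpos : (0 : ℝ) < 2 ^ (a + b) * (a ! * b !) := by positivity
  refine mul_left_cancel₀ hpos.ne' ?_
  linear_combination choose_two_mul_eq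

lemma sum_antidiagonal_choose_mul_oddFactorial (s : ℕ) :
    ∑ q ∈ antidiagonal s, (s.choose q.1 : ℝ) * (oddFactorial q.1 * oddFactorial q.2) =
      2 ^ s * s ! := by
  induction s with
  | zero => simp
  | succ s ih =>
    rw [sum_antidiagonal_choose_succ_mul fun a b => oddFactorial a * oddFactorial b,
      ← sum_add_distrib]
    calc ∑ q ∈ antidiagonal s, ((s.choose q.1 : ℝ) * (oddFactorial q.1 * oddFactorial (q.2 + 1)) +
          s.choose q.2 * (oddFactorial (q.1 + 1) * oddFactorial q.2))
        = ∑ q ∈ antidiagonal s,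
            2 * (s + 1) * ((s.choose q.1 : ℝ) * (oddFactorial q.1 * oddFactorial q.2)) := by
          refine sum_congr rfl fun q hq => ?_
          obtain rfl := mem_antidiagonal.1 hq
          rw [← Nat.choose_symm_add, oddFactorial_succ, oddFactorial_succ]
          push_cast
          ring
      _ = 2 ^ (s + 1) * (s + 1)! := by
          rw [← mul_sum, ih, Nat.factorial_succ]
          push_cast
          ring

lemma sq_two_pow_mul_factorial_le {a : ℕ} (ha : 1 ≤ a) :
    (2 ^ a * a ! : ℝ) ^ 2 ≤ 4 * a * oddFactorial a ^ 2 := by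
  induction a, ha using Nat.le_induction with
  | base => norm_num [oddFactorial_succ]
  | succ a ha ih =>
    calc (2 ^ (a + 1) * (a + 1)! : ℝ) ^ 2 = 4 * (a + 1) ^ 2 * (2 ^ a * a !) ^ 2 := by
          rw [Nat.factorial_succ]; push_cast; ring
      _ ≤ 4 * (a + 1) ^ 2 * (4 * a * oddFactorial a ^ 2) := by gcongr
      _ = 4 * (a + 1) * (4 * a * (a + 1)) * oddFactorial a ^ 2 := by ring
      _ ≤ 4 * (a + 1) * (2 * a + 1) ^ 2 * oddFactorial a ^ 2 := by gcongr; nlinarith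
      _ = 4 * (a + 1 : ℕ) * oddFactorial (a + 1) ^ 2 := by
          rw [oddFactorial_succ]; push_cast; ring

lemma two_pow_mul_factorial_mul_le {a b : ℕ} (ha : 1 ≤ a) (hb : 1 ≤ b) :
    (2 ^ a * a ! : ℝ) * (2 ^ b * b !) ≤ 2 * (a + b) * (oddFactorial a * oddFactorial b) := by
  have oddFactorial_mul_pos : 0 < oddFactorial a * oddFactorial b :=
    mul_pos (oddFactorial_pos a) (oddFactorial_pos b)
  refine le_of_sq_le_sq ?_ (by positivity)
  calc ((2 ^ a * a ! : ℝ) * (2 ^ b * b !)) ^ 2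
      = (2 ^ a * a !) ^ 2 * (2 ^ b * b !) ^ 2 := mul_pow _ _ _
    _ ≤ (4 * a * oddFactorial a ^ 2) * (4 * b * oddFactorial b ^ 2) :=
        mul_le_mul (sq_two_pow_mul_factorial_le ha) (sq_two_pow_mul_factorial_le hb)
          (by positivity) (by positivity)
    _ = 4 * (4 * a * b) * (oddFactorial a * oddFactorial b) ^ 2 := by ring
    _ ≤ 4 * (a + b) ^ 2 * (oddFactorial a * oddFactorial b) ^ 2 := by
        gcongr
        nlinarith [sq_nonneg ((a : ℝ) - b)]
    _ = _ := by ring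

/-- The weight of an exponent `p` in dimension `d`, modelled on the `2p`-th moment of a
coordinate of a random unit vector, which is about `oddFactorial p / d ^ p`. The factor `1 / 4` for
`p ≠ 0` is what makes one averaging step a contraction. -/
def siteWeight (d p : ℕ) : ℝ := if p = 0 then 1 else 1 / 4 * (8 / d) ^ p * oddFactorial p

@[simp] lemma siteWeight_zero (d : ℕ) : siteWeight d 0 = 1 := if_pos rfl

lemma siteWeight_of_pos (d : ℕ) {p : ℕ} (hp : 0 < p) :
    siteWeight d p = 1 / 4 * (8 / d) ^ p * oddFactorial p := if_neg hp.ne'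

lemma siteWeight_nonneg (d p : ℕ) : 0 ≤ siteWeight d p := by
  have := oddFactorial_pos p
  unfold siteWeight
  split_ifs <;> positivity

lemma siteWeight_mul_le (d : ℕ) {a b : ℕ} (hab : 0 < a + b) :
    siteWeight d a * siteWeight d b ≤
      1 / 4 * (8 / d) ^ (a + b) * (oddFactorial a * oddFactorial b) := by
  rcases Nat.eq_zero_or_pos a with rfl | ha
  · simp [siteWeight_of_pos d (p := b) (by lia)]
  rcases Nat.eq_zero_or_pos b with rfl | hb
  · simp [siteWeight_of_pos d ha]
  have oddFactorial_mul_pos : 0 < oddFactorial a * oddFactorial b :=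
    mul_pos (oddFactorial_pos a) (oddFactorial_pos b)
  have : (0 : ℝ) ≤ (8 / d) ^ (a + b) * (oddFactorial a * oddFactorial b) := by positivity
  rw [siteWeight_of_pos d ha, siteWeight_of_pos d hb]
  calc 1 / 4 * (8 / d : ℝ) ^ a * oddFactorial a * (1 / 4 * (8 / d) ^ b * oddFactorial b)
      = 1 / 16 * ((8 / d) ^ (a + b) * (oddFactorial a * oddFactorial b)) := by ring
    _ ≤ 1 / 4 * ((8 / d) ^ (a + b) * (oddFactorial a * oddFactorial b)) := by gcongr; norm_num
    _ = _ := by ring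

lemma choose_two_mul_mul_siteWeight_le (d a b : ℕ) :
    ((2 * (a + b)).choose (2 * a) : ℝ) * (siteWeight d a * siteWeight d b) ≤
      siteWeight d (a + b) *
        ((if a = 0 then 1 else 0) + (if b = 0 then 1 else 0) + 1 / 4 * (a + b).choose a) := by
  have weight_nonneg := siteWeight_nonneg d
  rcases Nat.eq_zero_or_pos a with rfl | ha
  · have := weight_nonneg b
    simp only [siteWeight_zero, zero_add, if_true, mul_zero, Nat.choose_zero_right, Nat.cast_one,
      one_mul]
    split_ifs <;> linarith
  rcases Nat.eq_zero_or_pos b with rfl | hb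
  · have := weight_nonneg a
    simp only [siteWeight_zero, add_zero, mul_one, if_true, if_neg ha.ne', Nat.choose_self,
      Nat.cast_one, one_mul, zero_add]
    linarith
  refine le_of_eq ?_
  rw [if_neg ha.ne', if_neg hb.ne', siteWeight_of_pos d ha, siteWeight_of_pos d hb,
    siteWeight_of_pos d (by lia)]
  linear_combination 1 / 16 * (8 / d : ℝ) ^ (a + b) * choose_two_mul_mul_oddFactorial a b

lemma sum_choose_two_mul_siteWeight_le (d : ℕ) {p : ℕ} (hp : 2 ≤ p) :
    ∑ q ∈ antidiagonal p,
        ((2 * p).choose (2 * q.1) : ℝ) / 2 ^ p * (siteWeight d q.1 * siteWeight d q.2) ≤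
      3 / 4 * siteWeight d p := by
  have four_le : (4 : ℝ) ≤ 2 ^ p := by
    calc (4 : ℝ) = 2 ^ 2 := by norm_num
      _ ≤ 2 ^ p := pow_le_pow_right₀ one_le_two hp
  have sum_choose : ∑ q ∈ antidiagonal p, (p.choose q.1 : ℝ) = 2 ^ p := by
    exact_mod_cast (Nat.sum_antidiagonal_eq_sum_range_succ_mk _ p).trans (Nat.sum_range_choose p)
  have sum_left : ∑ q ∈ antidiagonal p, (if q.1 = 0 then 1 else 0) = (1 : ℝ) := by
    rw [Nat.sum_antidiagonal_eq_sum_range_succ_mk]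
    simp
  have sum_right : ∑ q ∈ antidiagonal p, (if q.2 = 0 then 1 else 0) = (1 : ℝ) := by
    rw [← Nat.sum_antidiagonal_swap]
    exact sum_left
  calc ∑ q ∈ antidiagonal p,
        ((2 * p).choose (2 * q.1) : ℝ) / 2 ^ p * (siteWeight d q.1 * siteWeight d q.2)
      ≤ ∑ q ∈ antidiagonal p, siteWeight d p / 2 ^ p * ((if q.1 = 0 then 1 else 0) +
          (if q.2 = 0 then 1 else 0) + 1 / 4 * p.choose q.1) := by
        refine sum_le_sum fun q hq => ?_
        obtain rfl := mem_antidiagonal.1 hq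
        rw [div_mul_eq_mul_div, div_mul_eq_mul_div]
        gcongr ?_ / _
        exact choose_two_mul_mul_siteWeight_le d q.1 q.2
    _ = siteWeight d p * (2 / 2 ^ p + 1 / 4) := by
        rw [← mul_sum, sum_add_distrib, sum_add_distrib, sum_left, sum_right, ← mul_sum, sum_choose]
        field_simp
        ring
    _ ≤ siteWeight d p * (3 / 4) := by
        gcongr
        · exact siteWeight_nonneg d p
        · rw [div_add' _ _ _ (by positivity), div_le_iff₀ (by positivity)]
          linarith
    _ = _ := mul_comm _ _

/-- A single term of the binomial expansion of `(a + b) ^ (a + b)`. -/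
lemma choose_mul_pow_mul_pow_le (a b : ℕ) :
    ((a + b).choose a : ℝ) * (a ^ a * b ^ b) ≤ (a + b : ℕ) ^ (a + b) := by
  push_cast
  rw [add_pow (a : ℝ) b]
  refine le_of_eq_of_le ?_ (single_le_sum (f := fun m => (a : ℝ) ^ m * (b : ℝ) ^ (a + b - m) *
    ((a + b).choose m : ℝ)) (fun _ _ => by positivity) (mem_range.2 (show a < a + b + 1 by lia)))
  simp [mul_comm]

/-- The largest value of `u ^ a * v ^ b` over nonnegative `u` and `v` with `u + v = 1`. -/
def amgmConst (a b : ℕ) : ℝ := a ^ a * b ^ b / (a + b : ℕ) ^ (a + b)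

lemma amgmConst_nonneg (a b : ℕ) : 0 ≤ amgmConst a b := by
  unfold amgmConst
  positivity

lemma amgmConst_mul_factorial_le (a b : ℕ) : amgmConst a b * (a + b)! ≤ a ! * b ! := by
  rcases Nat.eq_zero_or_pos (a + b) with h | h
  · obtain ⟨rfl, rfl⟩ := Nat.add_eq_zero_iff.1 h
    simp [amgmConst]
  have choose_eq := Nat.add_choose_mul_factorial_mul_factorial a b
  rw [← Nat.choose_symm_add] at choose_eq
  rify at choose_eq
  have choose_mul_le : amgmConst a b * (a + b).choose a ≤ 1 := by
    rw [amgmConst, div_mul_eq_mul_div, div_le_one (by positivity), mul_comm]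
    exact choose_mul_pow_mul_pow_le a b
  calc amgmConst a b * (a + b)! = amgmConst a b * (a + b).choose a * (a ! * b !) := by
        rw [← choose_eq]; ring
    _ ≤ 1 * (a ! * b !) := by gcongr
    _ = _ := one_mul _

lemma sum_choose_mul_amgmConst_siteWeight_le (d : ℕ) {a b : ℕ} (ha : 1 ≤ a) (hb : 1 ≤ b) :
    ∑ q ∈ antidiagonal (a + b),
        (a + b).choose q.1 * amgmConst a b * (siteWeight d q.1 * siteWeight d q.2) ≤
      8 * (a + b) * (siteWeight d a * siteWeight d b) := by
  have amgm_nonneg := amgmConst_nonneg a b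
  calc ∑ q ∈ antidiagonal (a + b),
        (a + b).choose q.1 * amgmConst a b * (siteWeight d q.1 * siteWeight d q.2)
      ≤ ∑ q ∈ antidiagonal (a + b), (a + b).choose q.1 * amgmConst a b *
          (1 / 4 * (8 / d) ^ (a + b) * (oddFactorial q.1 * oddFactorial q.2)) := by
        refine sum_le_sum fun q hq => ?_
        rw [← mem_antidiagonal.1 hq]
        gcongr _ * ?_
        exact siteWeight_mul_le d (by rw [mem_antidiagonal.1 hq]; lia)
    _ = 1 / 4 * (8 / d) ^ (a + b) * (2 ^ (a + b) * (amgmConst a b * (a + b)!)) := by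
        rw [mul_left_comm (2 ^ (a + b)), ← sum_antidiagonal_choose_mul_oddFactorial, mul_sum,
          mul_sum]
        exact sum_congr rfl fun _ _ => by ring
    _ ≤ 1 / 4 * (8 / d) ^ (a + b) * (2 ^ (a + b) * (a ! * b !)) := by
        gcongr _ * (_ * ?_)
        exact amgmConst_mul_factorial_le a b
    _ = 1 / 4 * (8 / d) ^ (a + b) * ((2 ^ a * a !) * (2 ^ b * b !)) := by ring
    _ ≤ 1 / 4 * (8 / d) ^ (a + b) * (2 * (a + b) * (oddFactorial a * oddFactorial b)) := by
        gcongr 1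
        exact two_pow_mul_factorial_mul_le ha hb
    _ = 8 * (a + b) * (siteWeight d a * siteWeight d b) := by
        rw [siteWeight_of_pos d ha, siteWeight_of_pos d hb]
        ring

/-- A bound for the coefficient of `u ^ c * v ^ (a + b - c)` in the average of
`(x i ^ 2) ^ a * (x j ^ 2) ^ b` over the two rotations by `π / 4` in the plane of `i` and `j`, where
`u` and `v` are the squared coordinates before the rotation: it is exact if `a = 0` or `b = 0`, and
comes from the inequality of arithmetic and geometric means otherwise. -/
def mixCoeff (a b c : ℕ) : ℝ :=
  if a = 0 ∨ b = 0 then (2 * (a + b)).choose (2 * c) / 2 ^ (a + b)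
  else (a + b).choose c * amgmConst a b

lemma mixCoeff_nonneg (a b c : ℕ) : 0 ≤ mixCoeff a b c := by
  rw [mixCoeff]
  split_ifs
  · positivity
  · exact mul_nonneg (Nat.cast_nonneg _) (amgmConst_nonneg a b)

/-- The factor by which one rotation in the plane of two coordinates with exponents `a` and `b` may
multiply their weight. -/
def growth (a b : ℕ) : ℝ :=
  1 - 1 / 4 * ((if a = 0 then 0 else 1) + (if b = 0 then 0 else 1)) +
    8 * ((if b = 0 then 0 else a) + (if a = 0 then 0 else b))

lemma sum_mixCoeff_mul_siteWeight_le (d : ℕ) {a b : ℕ} (ha : a ≠ 1) (hb : b ≠ 1) :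
    ∑ q ∈ antidiagonal (a + b), mixCoeff a b q.1 * (siteWeight d q.1 * siteWeight d q.2) ≤
      growth a b * (siteWeight d a * siteWeight d b) := by
  rcases Nat.eq_zero_or_pos a with rfl | ha₀ <;> rcases Nat.eq_zero_or_pos b with rfl | hb₀
  · simp [mixCoeff, growth]
  · have := sum_choose_two_mul_siteWeight_le d (p := b) (by lia)
    simp only [mixCoeff, growth, true_or, if_true, zero_add, if_neg hb₀.ne', siteWeight_zero,
      Nat.cast_zero, one_mul]
    linarith
  · have := sum_choose_two_mul_siteWeight_le d (p := a) (by lia)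
    simp only [mixCoeff, growth, or_true, if_true, add_zero, if_neg ha₀.ne', siteWeight_zero,
      Nat.cast_zero, mul_one]
    linarith
  · refine le_of_eq_of_le ?_ ((sum_choose_mul_amgmConst_siteWeight_le d ha₀ hb₀).trans ?_)
    · simp [mixCoeff, ha₀.ne', hb₀.ne']
    · refine mul_le_mul_of_nonneg_right ?_
        (mul_nonneg (siteWeight_nonneg d a) (siteWeight_nonneg d b))
      simp only [growth, if_neg ha₀.ne', if_neg hb₀.ne']
      linarith

end SiteWeight

/-! ### Rotations of monomials in the squared coordinates -/

section Rotation

lemma pow_mul_pow_le_amgmConst_mul {a b : ℕ} (ha : 1 ≤ a) (hb : 1 ≤ b) {u v : ℝ} (hu : 0 ≤ u)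
    (hv : 0 ≤ v) : u ^ a * v ^ b ≤ amgmConst a b * (u + v) ^ (a + b) := by
  have : (0 : ℝ) < a := by exact_mod_cast ha
  have : (0 : ℝ) < b := by exact_mod_cast hb
  have weighted := pow_le_pow_left₀ (by positivity) (geom_mean_le_arith_mean2_weighted
    (w₁ := a / (a + b)) (w₂ := b / (a + b)) (p₁ := u / a) (p₂ := v / b) (by positivity)
    (by positivity) (by positivity) (by positivity) (by field_simp)) (a + b)
  have exponent_left : (a : ℝ) / (a + b) * ((a + b : ℕ) : ℝ) = a := by push_cast; field_simp
  have exponent_right : (b : ℝ) / (a + b) * ((a + b : ℕ) : ℝ) = b := by push_cast; field_simp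
  have mean_eq : (a : ℝ) / (a + b) * (u / a) + b / (a + b) * (v / b) = (u + v) / (a + b) := by
    field_simp
  rw [mul_pow, ← rpow_mul_natCast (by positivity), ← rpow_mul_natCast (by positivity),
    exponent_left, exponent_right, rpow_natCast, rpow_natCast, mean_eq, div_pow, div_pow,
    div_pow] at weighted
  calc u ^ a * v ^ b = a ^ a * b ^ b * (u ^ a / a ^ a * (v ^ b / b ^ b)) := by field_simp
    _ ≤ a ^ a * b ^ b * ((u + v) ^ (a + b) / (a + b) ^ (a + b)) := by gcongr
    _ = amgmConst a b * (u + v) ^ (a + b) := by rw [amgmConst]; push_cast; ring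

lemma sub_pow_two_mul_add_add_pow_two_mul (p : ℕ) (x y : ℝ) :
    (x - y) ^ (2 * p) + (x + y) ^ (2 * p) =
      2 * ∑ q ∈ antidiagonal p, (2 * p).choose (2 * q.1) * ((x ^ 2) ^ q.1 * (y ^ 2) ^ q.2) := by
  have binomial (y : ℝ) : (x + y) ^ (2 * p) =
      ∑ m ∈ antidiagonal (2 * p), (2 * p).choose m.1 * (x ^ m.1 * y ^ m.2) := by
    simpa using (Commute.all x y).add_pow' (2 * p)
  rw [sub_eq_add_neg, binomial, binomial, ← sum_add_distrib, mul_sum]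
  symm
  apply sum_of_injOn (fun q => (2 * q.1, 2 * q.2))
  · rintro ⟨_, _⟩ _ ⟨_, _⟩ _ h
    simpa using h
  · intro q hq
    simp only [mem_coe, HasAntidiagonal.mem_antidiagonal] at hq ⊢
    omega
  · rintro ⟨m, m'⟩ hm hm_image
    rw [HasAntidiagonal.mem_antidiagonal] at hm
    have hm' : Odd m' := by
      rw [← Nat.not_even_iff_odd, even_iff_two_dvd]
      rintro ⟨r, rfl⟩
      have hr : r ≤ p := by omega
      exact hm_image ⟨(p - r, r), mem_coe.2 (mem_antidiagonal.2 (Nat.sub_add_cancel hr)),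
        Prod.ext (by dsimp only; omega) rfl⟩
    simp [hm'.neg_pow]
  · intro q _
    simp only [← pow_mul, (even_two_mul q.2).neg_pow]
    ring

/-- The two products on the left are what the two orientations of the rotation by `π / 4` make of
`(x ^ 2) ^ a * (y ^ 2) ^ b`. -/
lemma sq_sub_pow_mul_sq_add_pow_add_le (a b : ℕ) (x y : ℝ) :
    ((x - y) ^ 2 / 2) ^ a * ((x + y) ^ 2 / 2) ^ b + ((x + y) ^ 2 / 2) ^ a * ((x - y) ^ 2 / 2) ^ b ≤
      2 * ∑ q ∈ antidiagonal (a + b), mixCoeff a b q.1 * ((x ^ 2) ^ q.1 * (y ^ 2) ^ q.2) := by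
  by_cases hab : a = 0 ∨ b = 0
  · have binomial :
        2 * ∑ q ∈ antidiagonal (a + b), mixCoeff a b q.1 * ((x ^ 2) ^ q.1 * (y ^ 2) ^ q.2) =
          ((x - y) ^ (2 * (a + b)) + (x + y) ^ (2 * (a + b))) / 2 ^ (a + b) := by
      rw [sub_pow_two_mul_add_add_pow_two_mul, mul_div_assoc, sum_div]
      simp only [mixCoeff, hab, if_true, div_mul_eq_mul_div]
    rw [binomial, pow_mul, pow_mul]
    apply le_of_eq
    rcases hab with rfl | rfl <;> simp only [pow_zero, zero_add, add_zero, div_pow] <;> ring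
  · have ha : 1 ≤ a := by omega
    have hb : 1 ≤ b := by omega
    have bound_left := pow_mul_pow_le_amgmConst_mul ha hb
      (div_nonneg (sq_nonneg (x - y)) zero_le_two) (div_nonneg (sq_nonneg (x + y)) zero_le_two)
    have bound_right := pow_mul_pow_le_amgmConst_mul ha hb
      (div_nonneg (sq_nonneg (x + y)) zero_le_two) (div_nonneg (sq_nonneg (x - y)) zero_le_two)
    have binomial : ∑ q ∈ antidiagonal (a + b), mixCoeff a b q.1 * ((x ^ 2) ^ q.1 * (y ^ 2) ^ q.2) =
        amgmConst a b * (x ^ 2 + y ^ 2) ^ (a + b) := by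
      rw [(Commute.all _ _).add_pow', mul_sum]
      simp only [mixCoeff, hab, if_false, nsmul_eq_mul]
      exact sum_congr rfl fun _ _ => by ring
    rw [show (x - y) ^ 2 / 2 + (x + y) ^ 2 / 2 = x ^ 2 + y ^ 2 by ring] at bound_left
    rw [show (x + y) ^ 2 / 2 + (x - y) ^ 2 / 2 = x ^ 2 + y ^ 2 by ring] at bound_right
    rw [binomial]
    linarith

variable {d : ℕ}

lemma rotM_pi_div_four_mulVec_apply {i j : Fin d} (hij : i ≠ j) (x : Fin d → ℝ) (l : Fin d) :
    (rotM d i j (π / 4)).mulVec x l =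
      if l = i then (x i - x j) / √2 else if l = j then (x i + x j) / √2 else x l := by
  have sqrt_two_div : √2 / 2 = 1 / √2 := by
    rw [div_eq_div_iff (by norm_num) (by positivity)]; simp
  simp only [Matrix.mulVec, dotProduct, rotM, Matrix.of_apply, cos_pi_div_four, sin_pi_div_four]
  by_cases hli : l = i
  · subst hli
    rw [sum_eq_add l j hij (by simp +contextual [hij, eq_comm]) (by simp) (by simp)]
    simp only [hij, hij.symm, sqrt_two_div, and_self, and_true, and_false, if_true, if_false]
    ring
  · by_cases hlj : l = j
    · subst hlj
      rw [sum_eq_add i l hij (by simp +contextual [hij.symm, eq_comm]) (by simp) (by simp)]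
      simp only [hij, hij.symm, sqrt_two_div, and_self, true_and, false_and, if_true, if_false]
      ring
    · simp [hli, hlj]

lemma rotM_pi_div_four_mulVec_comp_perm {i j : Fin d} (hij : i ≠ j) (x : Fin d → ℝ)
    (σ : Equiv.Perm (Fin d)) :
    (rotM d (σ i) (σ j) (π / 4)).mulVec x ∘ σ = (rotM d i j (π / 4)).mulVec (x ∘ σ) := by
  ext l
  simp [rotM_pi_div_four_mulVec_apply hij, rotM_pi_div_four_mulVec_apply (σ.injective.ne hij)]

lemma prod_eq_mul_mul_prod_sdiff_pair {ι M : Type*} [Fintype ι] [DecidableEq ι] [CommMonoid M]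
    {i j : ι} (hij : i ≠ j) (g : ι → M) : ∏ l, g l = g i * g j * ∏ l ∈ univ \ {i, j}, g l := by
  rw [← prod_sdiff (subset_univ {i, j}), prod_pair hij, mul_comm]

lemma sum_sq_rotM_pi_div_four_mulVec {i j : Fin d} (hij : i ≠ j) (x : Fin d → ℝ) :
    ∑ l, (rotM d i j (π / 4)).mulVec x l ^ 2 = ∑ l, x l ^ 2 := by
  have split (g : Fin d → ℝ) : ∑ l, g l = g i + g j + ∑ l ∈ univ \ {i, j}, g l := by
    rw [← sum_sdiff (subset_univ {i, j}), sum_pair hij, add_comm]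
  rw [split, split fun l => x l ^ 2]
  simp only [rotM_pi_div_four_mulVec_apply hij]
  congr 1
  · simp only [if_true, hij.symm, if_false, div_pow, sq_sqrt zero_le_two]
    ring
  · refine sum_congr rfl fun l hl => ?_
    simp only [mem_sdiff, mem_univ, mem_insert, mem_singleton, true_and, not_or] at hl
    simp [hl]

end Rotation

section SqMonomial

variable {ι : Type*} [Fintype ι]

/-- The monomial with exponents `α` in the squares of the coordinates of `x`. -/
def sqMonomial (α : ι → ℕ) (x : ι → ℝ) : ℝ := ∏ l, (x l ^ 2) ^ α l

lemma sqMonomial_nonneg (α : ι → ℕ) (x : ι → ℝ) : 0 ≤ sqMonomial α x :=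
  prod_nonneg fun _ _ => by positivity

variable [DecidableEq ι]

/-- The exponents `α` with the ones at `i` and `j` replaced by `q.1` and `q.2`. -/
def redistribute (α : ι → ℕ) (i j : ι) (q : ℕ × ℕ) : ι → ℕ :=
  Function.update (Function.update α i q.1) j q.2

lemma prod_redistribute {M : Type*} [CommMonoid M] {i j : ι} (hij : i ≠ j) (α : ι → ℕ) (q : ℕ × ℕ)
    (g : ι → ℕ → M) :
    ∏ l, g l (redistribute α i j q l) = g i q.1 * g j q.2 * ∏ l ∈ univ \ {i, j}, g l (α l) := by
  rw [prod_eq_mul_mul_prod_sdiff_pair hij]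
  congr 1
  · simp [redistribute, hij]
  · refine prod_congr rfl fun l hl => ?_
    simp only [mem_sdiff, mem_univ, mem_insert, mem_singleton, true_and, not_or] at hl
    simp [redistribute, hl]

lemma sum_redistribute {i j : ι} (hij : i ≠ j) (α : ι → ℕ) {q : ℕ × ℕ}
    (hq : q ∈ antidiagonal (α i + α j)) : ∑ l, redistribute α i j q l = ∑ l, α l := by
  have sum_update := prod_redistribute hij α q fun _ n => Multiplicative.ofAdd n
  have sum_split := prod_eq_mul_mul_prod_sdiff_pair hij fun l => Multiplicative.ofAdd (α l)
  simp only [← ofAdd_sum, ← ofAdd_add, EmbeddingLike.apply_eq_iff_eq] at sum_update sum_split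
  rw [sum_update, sum_split, HasAntidiagonal.mem_antidiagonal.1 hq]

lemma sqMonomial_rotM_add_sqMonomial_rotM_le {d : ℕ} {i j : Fin d} (hij : i ≠ j) (α : Fin d → ℕ)
    (x : Fin d → ℝ) :
    sqMonomial α ((rotM d i j (π / 4)).mulVec x) + sqMonomial α ((rotM d j i (π / 4)).mulVec x) ≤
      2 * ∑ q ∈ antidiagonal (α i + α j),
        mixCoeff (α i) (α j) q.1 * sqMonomial (redistribute α i j q) x := by
  set rest := ∏ l ∈ univ \ {i, j}, (x l ^ 2) ^ α l
  have : 0 ≤ rest := prod_nonneg fun _ _ => by positivity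
  have split {z : Fin d → ℝ} (hz : ∀ l, l ≠ i → l ≠ j → z l = x l) :
      sqMonomial α z = (z i ^ 2) ^ α i * (z j ^ 2) ^ α j * rest := by
    rw [sqMonomial, prod_eq_mul_mul_prod_sdiff_pair hij]
    congr 1
    refine prod_congr rfl fun l hl => ?_
    simp only [mem_sdiff, mem_univ, mem_insert, mem_singleton, true_and, not_or] at hl
    rw [hz l hl.1 hl.2]
  have split_redistribute (q : ℕ × ℕ) :
      sqMonomial (redistribute α i j q) x = (x i ^ 2) ^ q.1 * (x j ^ 2) ^ q.2 * rest :=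
    prod_redistribute hij α q fun l n => (x l ^ 2) ^ n
  rw [split (by simp +contextual [rotM_pi_div_four_mulVec_apply hij]),
    split (by simp +contextual [rotM_pi_div_four_mulVec_apply hij.symm])]
  simp only [split_redistribute, rotM_pi_div_four_mulVec_apply hij,
    rotM_pi_div_four_mulVec_apply hij.symm, if_true, hij, hij.symm, if_false, div_pow,
    sq_sqrt zero_le_two, add_comm (x j), sub_sq_comm (x j)]
  simp only [← mul_assoc, ← sum_mul, ← add_mul]
  gcongr
  simpa only [div_pow, mul_assoc] using
    sq_sub_pow_mul_sq_add_pow_add_le (α i) (α j) (x i) (x j)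

end SqMonomial

/-! ### One step of the walk -/

section Step

variable {d : ℕ}

/-- The expectation of `f` after one step of the walk, as a function of the current position. -/
def oraStep (d : ℕ) : Module.End ℝ ((Fin d → ℝ) → ℝ) where
  toFun f x := 𝔼 p ∈ univ.offDiag, f ((rotM d p.1 p.2 (π / 4)).mulVec x)
  map_add' _ _ := funext fun _ => expect_add_distrib _ _ _
  map_smul' _ _ := funext fun _ => (mul_expect _ _ _).symm

lemma oraStep_apply (f : (Fin d → ℝ) → ℝ) (x : Fin d → ℝ) :
    oraStep d f x = 𝔼 p ∈ univ.offDiag, f ((rotM d p.1 p.2 (π / 4)).mulVec x) := rfl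

lemma expect_offDiag_comp_perm (g : Fin d × Fin d → ℝ) (σ : Equiv.Perm (Fin d)) :
    𝔼 p ∈ univ.offDiag, g (σ p.1, σ p.2) = 𝔼 p ∈ univ.offDiag, g p :=
  expect_equiv (σ.prodCongr σ) (by simp) fun _ _ => rfl

lemma expect_offDiag_swap (g : Fin d × Fin d → ℝ) :
    𝔼 p ∈ univ.offDiag, g p.swap = 𝔼 p ∈ univ.offDiag, g p :=
  expect_equiv (Equiv.prodComm _ _) (by simp [eq_comm]) fun _ _ => rfl

lemma commute_oraStep_permMean : Commute (oraStep d) permMean := by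
  ext f x
  change oraStep d (permMean f) x = permMean (oraStep d f) x
  simp only [oraStep_apply, permMean_apply]
  rw [expect_comm]
  refine expect_congr rfl fun σ _ => ?_
  rw [← expect_offDiag_comp_perm _ σ]
  refine expect_congr rfl fun p hp => ?_
  rw [rotM_pi_div_four_mulVec_comp_perm (mem_offDiag.1 hp).2.2]

lemma oraStep_mono_of_sphere {f g : (Fin d → ℝ) → ℝ} {r : ℝ}
    (h : ∀ x, ∑ i, x i ^ 2 = r → f x ≤ g x) {x : Fin d → ℝ} (hx : ∑ i, x i ^ 2 = r) :
    oraStep d f x ≤ oraStep d g x :=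
  expect_le_expect fun _ hp =>
    h _ ((sum_sq_rotM_pi_div_four_mulVec (mem_offDiag.1 hp).2.2 x).trans hx)

lemma offDiag_univ_fin_nonempty (hd : 2 ≤ d) : (univ : Finset (Fin d)).offDiag.Nonempty :=
  ⟨(⟨0, by omega⟩, ⟨1, by omega⟩), by simp [Fin.ext_iff]⟩

lemma oraStep_const (hd : 2 ≤ d) (c : ℝ) : oraStep d (fun _ => c) = fun _ => c :=
  funext fun _ => expect_const (offDiag_univ_fin_nonempty hd) c

lemma oraStep_sqMonomial_le (α : Fin d → ℕ) :
    oraStep d (sqMonomial α) ≤ 𝔼 p ∈ univ.offDiag, ∑ q ∈ antidiagonal (α p.1 + α p.2),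
      mixCoeff (α p.1) (α p.2) q.1 • sqMonomial (redistribute α p.1 p.2 q) := by
  intro x
  set g : Fin d × Fin d → ℝ := fun p => sqMonomial α ((rotM d p.1 p.2 (π / 4)).mulVec x)
  calc oraStep d (sqMonomial α) x = 𝔼 p ∈ univ.offDiag, (g p + g p.swap) / 2 := by
        rw [← expect_div, expect_add_distrib, expect_offDiag_swap]
        exact (add_self_div_two _).symm
    _ ≤ _ := by
      simp only [expect_apply, Finset.sum_apply, Pi.smul_apply, smul_eq_mul]
      refine expect_le_expect fun p hp => ?_
      have := sqMonomial_rotM_add_sqMonomial_rotM_le (mem_offDiag.1 hp).2.2 α x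
      simp only [g, Prod.fst_swap, Prod.snd_swap]
      linarith

end Step

section SymMean

variable {d : ℕ}

/-- The expectation of `f` after `t` steps of the walk from `x₀` followed by a uniformly random
permutation of the coordinates. Since permutations commute with the steps of the walk, this
functional can be followed one step at a time. -/
def oraSymMean (t : ℕ) (x₀ : Fin d → ℝ) : ((Fin d → ℝ) → ℝ) →ₗ[ℝ] ℝ :=
  LinearMap.proj x₀ ∘ₗ (oraStep d ^ t) ∘ₗ permMean

lemma oraSymMean_succ (t : ℕ) (x₀ : Fin d → ℝ) (f : (Fin d → ℝ) → ℝ) :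
    oraSymMean (t + 1) x₀ f = oraSymMean t x₀ (oraStep d f) := by
  change (oraStep d ^ (t + 1) * permMean : Module.End ℝ _) f x₀ =
    (oraStep d ^ t * (permMean * oraStep d) : Module.End ℝ _) f x₀
  rw [pow_succ, mul_assoc, commute_oraStep_permMean.eq]

lemma oraSymMean_le_of_permMean_le {x₀ : Fin d → ℝ} {r : ℝ} (hx₀ : ∑ i, x₀ i ^ 2 = r) (t : ℕ)
    {f g : (Fin d → ℝ) → ℝ} (h : ∀ x, ∑ i, x i ^ 2 = r → permMean f x ≤ permMean g x) :
    oraSymMean t x₀ f ≤ oraSymMean t x₀ g := by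
  induction t generalizing f g with
  | zero => exact h x₀ hx₀
  | succ t ih =>
    rw [oraSymMean_succ, oraSymMean_succ]
    refine ih fun x hx => ?_
    have commute (f : (Fin d → ℝ) → ℝ) : permMean (oraStep d f) = oraStep d (permMean f) :=
      (DFunLike.congr_fun commute_oraStep_permMean.eq f).symm
    rw [commute, commute]
    exact oraStep_mono_of_sphere h hx

lemma oraSymMean_mono {x₀ : Fin d → ℝ} {r : ℝ} (hx₀ : ∑ i, x₀ i ^ 2 = r) (t : ℕ)
    {f g : (Fin d → ℝ) → ℝ} (h : ∀ x, ∑ i, x i ^ 2 = r → f x ≤ g x) :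
    oraSymMean t x₀ f ≤ oraSymMean t x₀ g :=
  oraSymMean_le_of_permMean_le hx₀ t fun x hx => permMean_mono fun σ =>
    h _ ((Equiv.sum_comp σ fun i => x i ^ 2).trans hx)

lemma oraSymMean_const (hd : 2 ≤ d) (t : ℕ) (x₀ : Fin d → ℝ) (c : ℝ) :
    oraSymMean t x₀ (fun _ => c) = c := by
  induction t with
  | zero => exact permMean_of_invariant (f := fun _ => c) (x := x₀) fun _ => rfl
  | succ t ih => rw [oraSymMean_succ, oraStep_const hd, ih]

end SymMean

/-! ### Decay of the weighted moments -/

section Lyapunov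

variable {d : ℕ}

lemma expect_offDiag_fst (hd : 2 ≤ d) (f : Fin d → ℝ) :
    𝔼 p ∈ (univ : Finset (Fin d)).offDiag, f p.1 = (∑ i, f i) / d := by
  have hd' : (2 : ℝ) ≤ d := by exact_mod_cast hd
  have sum_eq : ∑ p ∈ (univ : Finset (Fin d)).offDiag, f p.1 = (d - 1) * ∑ i, f i := by
    rw [← product_sdiff_diag, sum_sdiff_eq_sub (by simp [subset_iff]), sum_diag, sum_product]
    simp only [sum_const, card_univ, Fintype.card_fin, nsmul_eq_mul, ← mul_sum]
    ring
  rw [expect_eq_sum_div_card, sum_eq, offDiag_card, card_univ, Fintype.card_fin, ← Nat.mul_sub_one]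
  push_cast [Nat.cast_sub (by omega : 1 ≤ d)]
  have : (d : ℝ) - 1 ≠ 0 := by linarith
  field_simp

lemma expect_offDiag_snd (hd : 2 ≤ d) (f : Fin d → ℝ) :
    𝔼 p ∈ (univ : Finset (Fin d)).offDiag, f p.2 = (∑ i, f i) / d := by
  rw [← expect_offDiag_fst hd, ← expect_offDiag_swap]
  rfl

lemma expect_offDiag_fst_mul_snd_le {f g : Fin d → ℝ} (hf : 0 ≤ f) (hg : 0 ≤ g) :
    𝔼 p ∈ univ.offDiag, f p.1 * g p.2 ≤ (∑ i, f i) * (∑ i, g i) / (d * (d - 1) : ℕ) := by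
  rw [expect_eq_sum_div_card, offDiag_card, card_univ, Fintype.card_fin, ← Nat.mul_sub_one,
    sum_mul_sum, ← sum_product']
  gcongr
  · intro p _ _
    exact mul_nonneg (hf p.1) (hg p.2)
  · exact subset_univ _

lemma expect_offDiag_mul_add_mul_le (hd : 2 ≤ d) {f g : Fin d → ℝ} (hf : 0 ≤ f) (hg : 0 ≤ g)
    (hfd : 64 * ∑ i, f i ≤ d - 1) :
    𝔼 p ∈ univ.offDiag, (f p.1 * g p.2 + g p.1 * f p.2) ≤ (∑ i, g i) / (32 * d) := by
  have hd' : (2 : ℝ) ≤ d := by exact_mod_cast hd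
  have cross_fg := expect_offDiag_fst_mul_snd_le hf hg
  have cross_gf := expect_offDiag_fst_mul_snd_le hg hf
  rw [mul_comm (∑ i, g i)] at cross_gf
  have cross : (∑ i, f i) * (∑ i, g i) / (d * (d - 1) : ℕ) ≤ (∑ i, g i) / (64 * d) :=
    calc (∑ i, f i) * (∑ i, g i) / (d * (d - 1) : ℕ)
        = (∑ i, f i) * (∑ i, g i) / (d * (d - 1)) := by
          rw [Nat.cast_mul, Nat.cast_pred (by omega)]
      _ ≤ (d - 1) / 64 * (∑ i, g i) / (d * (d - 1)) := by
          gcongr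
          · exact mul_nonneg (by linarith) (by linarith)
          · exact sum_nonneg fun i _ => hg i
          · linarith
      _ = (∑ i, g i) / (64 * d) := by
          have : (d : ℝ) - 1 ≠ 0 := by linarith
          field_simp
  rw [expect_add_distrib, show (∑ i, g i) / (32 * d) =
    (∑ i, g i) / (64 * d) + (∑ i, g i) / (64 * d) by ring]
  linarith

lemma expect_offDiag_growth_le {α : Fin d → ℕ} (hα : α ≠ 0) (hd : 100 * ∑ l, α l ≤ d) :
    𝔼 p ∈ univ.offDiag, growth (α p.1) (α p.2) ≤ 1 - 1 / (4 * d) := by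
  set s : Fin d → ℝ := fun l => if α l = 0 then 0 else 1
  set a : Fin d → ℝ := fun l => α l
  have s_nonneg : 0 ≤ s := fun l => by simp only [s]; split_ifs <;> simp
  obtain ⟨i, hi⟩ : ∃ i, α i ≠ 0 := Function.ne_iff.1 hα
  have one_le_sum_s : 1 ≤ ∑ l, s l := by
    simpa [s, hi] using single_le_sum (fun l _ => s_nonneg l) (mem_univ i)
  have one_le_sum : 1 ≤ ∑ l, α l :=
    (Nat.one_le_iff_ne_zero.2 hi).trans (single_le_sum (fun _ _ => Nat.zero_le _) (mem_univ i))
  have hd_two : 2 ≤ d := by omega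
  have sum_a_le : 64 * ∑ l, (α l : ℝ) ≤ d - 1 := by
    have : 64 * ∑ l, α l + 1 ≤ d := by omega
    rw [le_sub_iff_add_le]
    exact_mod_cast this
  have cross := expect_offDiag_mul_add_mul_le hd_two (fun l => Nat.cast_nonneg _) s_nonneg sum_a_le
  have growth_eq (p : Fin d × Fin d) : growth (α p.1) (α p.2) =
      1 - 1 / 4 * (s p.1 + s p.2) + 8 * (a p.1 * s p.2 + s p.1 * a p.2) := by
    simp only [growth, s, a, mul_ite, ite_mul, mul_one, mul_zero, one_mul, zero_mul,
      Nat.cast_ite, Nat.cast_zero]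
  simp only [growth_eq]
  rw [expect_add_distrib, expect_sub_distrib, expect_const (offDiag_univ_fin_nonempty hd_two),
    ← mul_expect, ← mul_expect, expect_add_distrib, expect_offDiag_fst hd_two,
    expect_offDiag_snd hd_two]
  have one_div_le : 1 / (4 * d : ℝ) ≤ (∑ l, s l) / (4 * d) := by gcongr
  have : (∑ l, s l) / (32 * d) = (∑ l, s l) / (4 * d) / 8 := by ring
  have : (∑ l, s l) / d = 4 * ((∑ l, s l) / (4 * d)) := by ring
  linarith

end Lyapunov

section MomentWeight

variable {d : ℕ}

/-- The Lyapunov function that dominates the moments of the walk: `momentWeight α` is, up to a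
factor exponential in the degree, the mean of `sqMonomial α` over the unit sphere. -/
def momentWeight (α : Fin d → ℕ) : ℝ := ∏ l, siteWeight d (α l)

lemma momentWeight_nonneg (α : Fin d → ℕ) : 0 ≤ momentWeight α :=
  prod_nonneg fun _ _ => siteWeight_nonneg _ _

lemma momentWeight_zero : momentWeight (0 : Fin d → ℕ) = 1 := by simp [momentWeight]

lemma momentWeight_of_eq_one {α : Fin d → ℕ} {i : Fin d} (hi : α i = 1) :
    momentWeight α = 2 / d * momentWeight (Function.update α i 0) := by
  have siteWeight_one : siteWeight d 1 = 2 / d := by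
    have oddFactorial_one : oddFactorial 1 = 1 := by
      simpa [oddFactorial_zero] using oddFactorial_succ 0
    rw [siteWeight_of_pos d one_pos, oddFactorial_one]
    ring
  rw [momentWeight, momentWeight, ← mul_prod_erase _ _ (mem_univ i),
    ← mul_prod_erase _ (fun l => siteWeight d (Function.update α i 0 l)) (mem_univ i), hi,
    siteWeight_one, Function.update_self, siteWeight_zero, one_mul]
  congr 1
  exact prod_congr rfl fun l hl => by rw [Function.update_of_ne (ne_of_mem_erase hl)]

lemma one_le_pow_mul_siteWeight (hd : 0 < d) (p : ℕ) : 1 ≤ (d : ℝ) ^ p * siteWeight d p := by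
  rcases p.eq_zero_or_pos with rfl | hp
  · simp
  · have weight_eq : (d : ℝ) ^ p * siteWeight d p = 1 / 4 * 8 ^ p * oddFactorial p := by
      rw [siteWeight_of_pos d hp, div_pow]
      field_simp
    rw [weight_eq]
    have : (8 : ℝ) ^ 1 ≤ 8 ^ p := pow_le_pow_right₀ (by norm_num) hp
    nlinarith [one_le_oddFactorial p]

lemma one_le_pow_mul_momentWeight (hd : 0 < d) (α : Fin d → ℕ) :
    1 ≤ (d : ℝ) ^ (∑ l, α l) * momentWeight α := by
  rw [momentWeight, ← prod_pow_eq_pow_sum, ← prod_mul_distrib]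
  exact prod_induction _ (1 ≤ ·) (fun _ _ => one_le_mul_of_one_le_of_one_le) le_rfl fun l _ =>
    one_le_pow_mul_siteWeight hd (α l)

lemma pow_mul_momentWeight_le (hd : 0 < d) (α : Fin d → ℕ) :
    (d : ℝ) ^ (∑ l, α l) * momentWeight α ≤
      ∏ l, (16 : ℝ) ^ α l * ((α l)! : ℝ) := by
  rw [momentWeight, ← prod_pow_eq_pow_sum, ← prod_mul_distrib]
  refine prod_le_prod
    (fun l _ => mul_nonneg (pow_nonneg d.cast_nonneg _) (siteWeight_nonneg _ _)) fun l _ => ?_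
  rcases (α l).eq_zero_or_pos with h | h
  · simp [h]
  · calc (d : ℝ) ^ α l * siteWeight d (α l) = 1 / 4 * 8 ^ α l * oddFactorial (α l) := by
          rw [siteWeight_of_pos d h, div_pow]
          field_simp
      _ ≤ 1 * 8 ^ α l * (2 ^ α l * (α l)!) := by
          gcongr
          · exact (oddFactorial_pos _).le
          · norm_num
          · exact oddFactorial_le _
      _ = 16 ^ α l * (α l)! := by
          rw [show (16 : ℝ) = 8 * 2 by norm_num, mul_pow]
          ring

end MomentWeight

section Moments

/-- A coordinate with exponent one may be exchanged with any coordinate with exponent zero, and the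
squares of the latter add up to at most `∑ i, x i ^ 2`. -/
lemma card_mul_permMean_sqMonomial_le {ι : Type*} [Fintype ι] [DecidableEq ι] {α : ι → ℕ} {i : ι}
    (hi : α i = 1) (x : ι → ℝ) :
    #{l | α l = 0} * permMean (sqMonomial α) x ≤
      (∑ l, x l ^ 2) * permMean (sqMonomial (Function.update α i 0)) x := by
  set β := Function.update α i 0
  set T : Finset ι := {l | β l ≠ 0}
  have update_of_ne {l : ι} (hl : l ≠ i) : β l = α l := Function.update_of_ne hl _ _
  have hβi : β i = 0 := Function.update_self _ _ _
  have sqMonomial_β (y : ι → ℝ) : sqMonomial β y = ∏ l ∈ T, (y l ^ 2) ^ β l :=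
    (prod_filter_of_ne (p := fun l => β l ≠ 0) fun l _ h hl => h (by rw [hl, pow_zero])).symm
  have sqMonomial_α (y : ι → ℝ) : sqMonomial α y = sqMonomial β y * y i ^ 2 := by
    rw [sqMonomial, sqMonomial, ← mul_prod_erase _ _ (mem_univ i),
      ← mul_prod_erase _ (fun l => (y l ^ 2) ^ β l) (mem_univ i), hi, hβi, pow_one, pow_zero,
      one_mul, mul_comm]
    congr 1
    exact prod_congr rfl fun l hl => by rw [update_of_ne (ne_of_mem_erase hl)]
  have exchange (z : ι) (hz : z ∈ ({l | α l = 0} : Finset ι)) :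
      permMean (sqMonomial α) x = permMean (fun y => sqMonomial β y * y z ^ 2) x := by
    have hz' : β z = 0 := by
      rw [mem_filter] at hz
      rw [update_of_ne (by rintro rfl; omega), hz.2]
    rw [funext sqMonomial_α]
    simp only [sqMonomial_β]
    exact permMean_prod_mul_eval_congr (fun l r => (r ^ 2) ^ β l) (fun r => r ^ 2)
      (by simp [T, hβi]) (by simp [T, hz']) x
  calc #{l | α l = 0} * permMean (sqMonomial α) x
      = permMean (∑ z with α z = 0, fun y => sqMonomial β y * y z ^ 2) x := by
        rw [map_sum, Finset.sum_apply, ← sum_congr rfl exchange, sum_const, nsmul_eq_mul]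
    _ ≤ permMean (fun y => (∑ l, y l ^ 2) * sqMonomial β y) x := by
        refine permMean_mono fun σ => ?_
        rw [Finset.sum_apply, ← mul_sum, mul_comm]
        exact mul_le_mul_of_nonneg_right
          (sum_le_sum_of_subset_of_nonneg (subset_univ _) fun _ _ _ => sq_nonneg _)
          (sqMonomial_nonneg _ _)
    _ = _ := permMean_mul_of_invariant (fun σ => Equiv.sum_comp σ fun l => x l ^ 2) _

variable {d : ℕ}

lemma le_two_mul_card_filter_eq_zero {α : Fin d → ℕ} (hα : 2 * ∑ l, α l ≤ d) :
    d ≤ 2 * #{l | α l = 0} := by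
  have partition := card_filter_add_card_filter_not (s := univ) fun l => α l = 0
  have card_le : #{l | ¬α l = 0} ≤ ∑ l, α l := by
    rw [card_filter]
    exact sum_le_sum fun l _ => by split_ifs <;> omega
  rw [card_univ, Fintype.card_fin] at partition
  omega

lemma oraSymMean_sqMonomial_le_of_eq_one {x₀ : Fin d → ℝ} (hx₀ : ∑ i, x₀ i ^ 2 = 1) (t : ℕ)
    {α : Fin d → ℕ} (hα : 2 * ∑ l, α l ≤ d) {i : Fin d} (hi : α i = 1) :
    oraSymMean t x₀ (sqMonomial α) ≤
      2 / d * oraSymMean t x₀ (sqMonomial (Function.update α i 0)) := by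
  rw [← smul_eq_mul, ← map_smul]
  refine oraSymMean_le_of_permMean_le hx₀ t fun x hx => ?_
  have exchange := card_mul_permMean_sqMonomial_le hi x
  have card_le : (d : ℝ) ≤ 2 * #{l | α l = 0} := by
    exact_mod_cast le_two_mul_card_filter_eq_zero hα
  have nonneg : 0 ≤ permMean (sqMonomial α) x := permMean_nonneg fun _ => sqMonomial_nonneg _ _
  rw [hx, one_mul] at exchange
  rw [map_smul, Pi.smul_apply, smul_eq_mul, div_mul_eq_mul_div,
    le_div_iff₀ (by exact_mod_cast i.pos)]
  nlinarith

lemma oraSymMean_sqMonomial_le_of_ne_one {x₀ : Fin d → ℝ} (hx₀ : ∑ i, x₀ i ^ 2 = 1) {t Q : ℕ}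
    (hQ : 2 * Q ≤ d) {A : ℝ}
    (h : ∀ α : Fin d → ℕ, ∑ l, α l ≤ Q → (∀ l, α l ≠ 1) →
      oraSymMean t x₀ (sqMonomial α) ≤ A * momentWeight α)
    {α : Fin d → ℕ} (hα : ∑ l, α l ≤ Q) :
    oraSymMean t x₀ (sqMonomial α) ≤ A * momentWeight α := by
  induction hn : ∑ l, α l using Nat.strong_induction_on generalizing α with
  | h n ih =>
    by_cases h_one : ∀ l, α l ≠ 1
    · exact h α hα h_one
    · push Not at h_one
      obtain ⟨i, hi⟩ := h_one
      have sum_update : ∑ l, Function.update α i 0 l + 1 = ∑ l, α l := by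
        rw [sum_update_of_mem (mem_univ i), ← add_sum_erase _ _ (mem_univ i), hi,
          sdiff_singleton_eq_erase]
        ring
      calc oraSymMean t x₀ (sqMonomial α)
          ≤ 2 / d * oraSymMean t x₀ (sqMonomial (Function.update α i 0)) :=
            oraSymMean_sqMonomial_le_of_eq_one hx₀ t (by omega) hi
        _ ≤ 2 / d * (A * momentWeight (Function.update α i 0)) := by
            gcongr
            exact ih _ (by omega) (by omega) rfl
        _ = A * momentWeight α := by
            rw [momentWeight_of_eq_one hi]
            ring

lemma sum_mixCoeff_mul_momentWeight_le {α : Fin d → ℕ} (h_one : ∀ l, α l ≠ 1) {i j : Fin d}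
    (hij : i ≠ j) :
    ∑ q ∈ antidiagonal (α i + α j), mixCoeff (α i) (α j) q.1 * momentWeight (redistribute α i j q) ≤
      growth (α i) (α j) * momentWeight α := by
  have split_redistribute (q : ℕ × ℕ) : momentWeight (redistribute α i j q) =
      siteWeight d q.1 * siteWeight d q.2 * ∏ l ∈ univ \ {i, j}, siteWeight d (α l) :=
    prod_redistribute hij α q fun _ => siteWeight d
  rw [momentWeight, prod_eq_mul_mul_prod_sdiff_pair hij]
  simp only [split_redistribute, ← mul_assoc, ← sum_mul]
  gcongr
  · exact prod_nonneg fun _ _ => siteWeight_nonneg _ _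
  · simpa only [mul_assoc] using sum_mixCoeff_mul_siteWeight_le d (h_one i) (h_one j)

lemma oraSymMean_succ_sqMonomial_le {x₀ : Fin d → ℝ} (hx₀ : ∑ i, x₀ i ^ 2 = 1) {t : ℕ} {A : ℝ}
    (hA : 0 ≤ A) {α : Fin d → ℕ} (h_one : ∀ l, α l ≠ 1)
    (h : ∀ β : Fin d → ℕ, ∑ l, β l = ∑ l, α l →
      oraSymMean t x₀ (sqMonomial β) ≤ A * momentWeight β) :
    oraSymMean (t + 1) x₀ (sqMonomial α) ≤
      A * (𝔼 p ∈ univ.offDiag, growth (α p.1) (α p.2)) * momentWeight α := by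
  rw [oraSymMean_succ]
  calc oraSymMean t x₀ (oraStep d (sqMonomial α))
      ≤ 𝔼 p ∈ univ.offDiag, ∑ q ∈ antidiagonal (α p.1 + α p.2),
          mixCoeff (α p.1) (α p.2) q.1 *
            oraSymMean t x₀ (sqMonomial (redistribute α p.1 p.2 q)) := by
        refine (oraSymMean_mono hx₀ t (g := 𝔼 p ∈ univ.offDiag, _)
          fun x _ => oraStep_sqMonomial_le α x).trans_eq ?_
        simp only [expect, map_sum, LinearMap.map_smul_of_tower, smul_eq_mul]
    _ ≤ 𝔼 p ∈ univ.offDiag, A * (growth (α p.1) (α p.2) * momentWeight α) := by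
        refine expect_le_expect fun p hp => ?_
        have hp_ne := (mem_offDiag.1 hp).2.2
        refine le_trans ?_ (mul_le_mul_of_nonneg_left
          (sum_mixCoeff_mul_momentWeight_le h_one hp_ne) hA)
        rw [mul_sum]
        refine sum_le_sum fun q hq => ?_
        rw [mul_left_comm]
        gcongr
        · exact mixCoeff_nonneg _ _ _
        · exact h _ (sum_redistribute hp_ne α hq)
    _ = A * (𝔼 p ∈ univ.offDiag, growth (α p.1) (α p.2)) * momentWeight α := by
        rw [← mul_expect, ← expect_mul, mul_assoc]

end Moments

section Decay

variable {d : ℕ}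

lemma sqMonomial_le_one {ι : Type*} [Fintype ι] {x : ι → ℝ} (hx : ∑ i, x i ^ 2 = 1) (α : ι → ℕ) :
    sqMonomial α x ≤ 1 :=
  prod_le_one (fun _ _ => by positivity) fun i _ => pow_le_one₀ (sq_nonneg _) <|
    hx ▸ single_le_sum (f := fun i => x i ^ 2) (fun _ _ => sq_nonneg _) (mem_univ i)

lemma oraSymMean_sqMonomial_le (hd : 2 ≤ d) {x₀ : Fin d → ℝ} (hx₀ : ∑ i, x₀ i ^ 2 = 1) {Q : ℕ}
    (hQ : 100 * Q ≤ d) (t : ℕ) {α : Fin d → ℕ} (hα : ∑ l, α l ≤ Q) :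
    oraSymMean t x₀ (sqMonomial α) ≤
      (1 + (1 - 1 / (4 * d)) ^ t * (d : ℝ) ^ Q) * momentWeight α := by
  have hd' : (2 : ℝ) ≤ d := by exact_mod_cast hd
  have rate_nonneg : (0 : ℝ) ≤ 1 - 1 / (4 * d) := by
    rw [sub_nonneg, div_le_one (by positivity)]
    linarith
  induction t generalizing α with
  | zero =>
    calc oraSymMean 0 x₀ (sqMonomial α) ≤ oraSymMean 0 x₀ fun _ => 1 :=
          oraSymMean_mono hx₀ 0 fun x hx => sqMonomial_le_one hx α
      _ = 1 := oraSymMean_const hd 0 x₀ 1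
      _ ≤ (d : ℝ) ^ (∑ l, α l) * momentWeight α := one_le_pow_mul_momentWeight (by omega) α
      _ ≤ (1 + (1 - 1 / (4 * d)) ^ 0 * (d : ℝ) ^ Q) * momentWeight α := by
        have := momentWeight_nonneg α
        have : (d : ℝ) ^ (∑ l, α l) ≤ d ^ Q := pow_le_pow_right₀ (by linarith) hα
        gcongr
        linarith
  | succ t ih =>
    refine oraSymMean_sqMonomial_le_of_ne_one hx₀ (by omega) (fun β hβ h_one => ?_) hα
    rcases eq_or_ne β 0 with rfl | hβ_ne
    · have sqMonomial_zero : sqMonomial (0 : Fin d → ℕ) = fun _ => 1 := by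
        funext x
        simp [sqMonomial]
      rw [sqMonomial_zero, oraSymMean_const hd, momentWeight_zero, mul_one]
      exact le_add_of_nonneg_right (by positivity)
    · refine (oraSymMean_succ_sqMonomial_le hx₀ (by positivity) h_one
        fun γ hγ => ih (hγ.trans_le hβ)).trans ?_
      refine mul_le_mul_of_nonneg_right ?_ (momentWeight_nonneg β)
      have contraction := expect_offDiag_growth_le hβ_ne (by omega)
      calc (1 + (1 - 1 / (4 * d)) ^ t * (d : ℝ) ^ Q) * 𝔼 p ∈ univ.offDiag, growth (β p.1) (β p.2)
          ≤ (1 + (1 - 1 / (4 * d)) ^ t * (d : ℝ) ^ Q) * (1 - 1 / (4 * d)) := by gcongr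
        _ = 1 - 1 / (4 * d) + (1 - 1 / (4 * d)) ^ (t + 1) * (d : ℝ) ^ Q := by ring
        _ ≤ 1 + (1 - 1 / (4 * d)) ^ (t + 1) * (d : ℝ) ^ Q := by
          gcongr
          exact sub_le_self _ (by positivity)

lemma one_sub_pow_mul_pow_le_one (hd : 0 < d) {Q t : ℕ} (ht : 4 * d * (Q * log d) ≤ t) :
    (1 - 1 / (4 * d)) ^ t * (d : ℝ) ^ Q ≤ 1 := by
  have hd' : (1 : ℝ) ≤ d := by exact_mod_cast hd
  have rate_nonneg : (0 : ℝ) ≤ 1 - 1 / (4 * d) := by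
    rw [sub_nonneg, div_le_one (by positivity)]
    linarith
  calc (1 - 1 / (4 * d)) ^ t * (d : ℝ) ^ Q
      ≤ exp (-(1 / (4 * d))) ^ t * exp (log d) ^ Q := by
        rw [exp_log (by linarith)]
        gcongr
        exact one_sub_le_exp_neg _
    _ = exp (Q * log d - t / (4 * d)) := by
        rw [← exp_nat_mul, ← exp_nat_mul, ← exp_add]
        ring_nf
    _ ≤ 1 := by
        rw [exp_le_one_iff, sub_nonpos, le_div_iff₀ (by positivity)]
        linarith

lemma oraSymMean_prod_pow_le (hd : 2 ≤ d) {x₀ : Fin d → ℝ} (hx₀ : ∑ i, x₀ i ^ 2 = 1) {Q t : ℕ}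
    (hQ : 100 * Q ≤ d) (ht : 4 * d * (Q * log d) ≤ t) {α : Fin d → ℕ} (hα : ∑ l, α l ≤ Q) :
    oraSymMean t x₀ (fun x => ∏ l, (d * x l ^ 2) ^ α l) ≤
      2 * ∏ l, (16 : ℝ) ^ α l * ((α l)! : ℝ) := by
  have scale : (fun x : Fin d → ℝ => ∏ l, (d * x l ^ 2) ^ α l) =
      (d : ℝ) ^ (∑ l, α l) • sqMonomial α := by
    funext x
    simp only [mul_pow, prod_mul_distrib, prod_pow_eq_pow_sum, Pi.smul_apply,
      smul_eq_mul, sqMonomial]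
  rw [scale, map_smul, smul_eq_mul]
  calc (d : ℝ) ^ (∑ l, α l) * oraSymMean t x₀ (sqMonomial α)
      ≤ d ^ (∑ l, α l) * ((1 + (1 - 1 / (4 * d)) ^ t * (d : ℝ) ^ Q) * momentWeight α) := by
        gcongr
        exact oraSymMean_sqMonomial_le hd hx₀ hQ t hα
    _ ≤ d ^ (∑ l, α l) * ((1 + 1) * momentWeight α) := by
        have := momentWeight_nonneg α
        gcongr
        exact one_sub_pow_mul_pow_le_one (by omega) ht
    _ ≤ 2 * ∏ l, (16 : ℝ) ^ α l * ((α l)! : ℝ) := by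
        linarith [pow_mul_momentWeight_le (by omega) α]

end Decay

/-! ### Moments of a sum over a subset of the coordinates -/

section SumPow

variable {ι : Type*} [DecidableEq ι]

lemma sum_piAntidiag_prod_le {f : ℕ → ℝ} (hf : 0 ≤ f) (S : Finset ι) (P : ℕ) :
    ∑ κ ∈ S.piAntidiag P, ∏ l ∈ S, f (κ l) ≤ (∑ j ∈ range (P + 1), f j) ^ #S := by
  set restrict : (ι → ℕ) → ∀ l ∈ S, ℕ := fun κ l _ => κ l
  have restrict_injOn : Set.InjOn restrict (S.piAntidiag P) := by
    intro κ hκ μ hμ h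
    funext l
    by_cases hl : l ∈ S
    · exact congrFun (congrFun h l) hl
    · rw [not_not.1 (mt ((mem_piAntidiag.1 hκ).2 l) hl),
        not_not.1 (mt ((mem_piAntidiag.1 hμ).2 l) hl)]
  have image_subset : (S.piAntidiag P).image restrict ⊆ S.pi fun _ => range (P + 1) := by
    refine image_subset_iff.2 fun κ hκ => mem_pi.2 fun l hl => mem_range_succ_iff.2 ?_
    rw [← (mem_piAntidiag.1 hκ).1]
    exact single_le_sum (f := κ) (fun _ _ => Nat.zero_le _) hl
  calc ∑ κ ∈ S.piAntidiag P, ∏ l ∈ S, f (κ l)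
      = ∑ p ∈ (S.piAntidiag P).image restrict, ∏ l ∈ S.attach, f (p l l.2) := by
        rw [sum_image restrict_injOn]
        exact sum_congr rfl fun κ _ => (prod_attach S fun l => f (κ l)).symm
    _ ≤ ∑ p ∈ S.pi fun _ => range (P + 1), ∏ l ∈ S.attach, f (p l l.2) :=
        sum_le_sum_of_subset_of_nonneg image_subset fun _ _ _ => prod_nonneg fun _ _ => hf _
    _ = (∑ j ∈ range (P + 1), f j) ^ #S :=
        (prod_sum S (fun _ => range (P + 1)) fun _ => f).symm.trans (prod_const _)

lemma sum_range_ite_mul_pow_le_exp {η z : ℝ} (hη : 0 ≤ η) (hz : 0 ≤ z) (hz_half : z ≤ 1 / 2)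
    (P : ℕ) : ∑ j ∈ range (P + 1), (if j = 0 then 1 else η) * z ^ j ≤ exp (2 * η * z) := by
  have geom_le : ∑ j ∈ range P, z ^ j ≤ 2 := by
    have := mul_neg_geom_sum z P
    nlinarith [pow_nonneg hz P, sum_nonneg fun j (_ : j ∈ range P) => pow_nonneg hz j]
  calc ∑ j ∈ range (P + 1), (if j = 0 then 1 else η) * z ^ j
      = η * z * ∑ j ∈ range P, z ^ j + 1 := by
        rw [sum_range_succ', mul_sum]
        simp [pow_succ', mul_assoc]
    _ ≤ η * z * 2 + 1 := by gcongr
    _ ≤ exp (2 * η * z) := by linarith [add_one_le_exp (2 * η * z)]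

lemma sum_piAntidiag_prod_ite_le {η z : ℝ} (hη : 0 ≤ η) (hz : 0 < z) (hz_half : z ≤ 1 / 2)
    (S : Finset ι) (P : ℕ) :
    ∑ κ ∈ S.piAntidiag P, ∏ l ∈ S, (if κ l = 0 then 1 else η) ≤
      (1 / z) ^ P * exp (2 * #S * η * z) := by
  have factor {κ : ι → ℕ} (hκ : κ ∈ S.piAntidiag P) : ∏ l ∈ S, (if κ l = 0 then 1 else η) =
      (1 / z) ^ P * ∏ l ∈ S, (if κ l = 0 then 1 else η) * z ^ κ l := by
    rw [prod_mul_distrib, prod_pow_eq_pow_sum, (mem_piAntidiag.1 hκ).1, mul_left_comm, ← mul_pow,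
      one_div_mul_cancel hz.ne', one_pow, mul_one]
  rw [sum_congr rfl fun κ hκ => factor hκ, ← mul_sum]
  gcongr
  calc ∑ κ ∈ S.piAntidiag P, ∏ l ∈ S, (if κ l = 0 then 1 else η) * z ^ κ l
      ≤ (∑ j ∈ range (P + 1), (if j = 0 then 1 else η) * z ^ j) ^ #S :=
        sum_piAntidiag_prod_le (f := fun j => (if j = 0 then 1 else η) * z ^ j)
          (fun j => by dsimp only; split_ifs <;> positivity) S P
    _ ≤ exp (2 * η * z) ^ #S := by
        gcongr
        exact sum_range_ite_mul_pow_le_exp hη hz.le hz_half P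
    _ = exp (2 * #S * η * z) := by
        rw [← exp_nat_mul]
        ring_nf

lemma map_sum_pow_le {R : Type*} [CommSemiring R] [Module ℝ R] (E : R →ₗ[ℝ] ℝ) (Z : ι → R)
    (S : Finset ι) (P : ℕ) {C η Γ z : ℝ} (hC : 0 ≤ C) (hη : 0 ≤ η) (hΓ : 0 ≤ Γ) (hz : 0 < z)
    (hz_half : z ≤ 1 / 2)
    (h : ∀ κ ∈ S.piAntidiag P, E (∏ l ∈ S, Z l ^ κ l) ≤
      C * ∏ l ∈ S, (if κ l = 0 then 1 else η) * (Γ ^ κ l * ((κ l)! : ℝ))) :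
    E ((∑ l ∈ S, Z l) ^ P) ≤ C * (P ! * (Γ / z) ^ P * exp (2 * #S * η * z)) := by
  have term_eq {κ : ι → ℕ} (hκ : κ ∈ S.piAntidiag P) :
      Nat.multinomial S κ * (C * ∏ l ∈ S, (if κ l = 0 then 1 else η) * (Γ ^ κ l * ((κ l)! : ℝ))) =
        C * (P ! * Γ ^ P) * ∏ l ∈ S, (if κ l = 0 then 1 else η) := by
    have multinomial_eq := Nat.multinomial_spec S κ
    rw [(mem_piAntidiag.1 hκ).1] at multinomial_eq
    rw [prod_mul_distrib, prod_mul_distrib, prod_pow_eq_pow_sum, (mem_piAntidiag.1 hκ).1,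
      ← multinomial_eq]
    push_cast
    ring
  calc E ((∑ l ∈ S, Z l) ^ P)
      = ∑ κ ∈ S.piAntidiag P, Nat.multinomial S κ * E (∏ l ∈ S, Z l ^ κ l) := by
        simp only [sum_pow_eq_sum_piAntidiag, map_sum, ← nsmul_eq_mul, map_nsmul]
    _ ≤ ∑ κ ∈ S.piAntidiag P, C * (P ! * Γ ^ P) * ∏ l ∈ S, (if κ l = 0 then 1 else η) :=
        sum_le_sum fun κ hκ => by
          rw [← term_eq hκ]
          gcongr
          exact h κ hκ
    _ ≤ C * (P ! * Γ ^ P) * ((1 / z) ^ P * exp (2 * #S * η * z)) := by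
        rw [← mul_sum]
        gcongr
        exact sum_piAntidiag_prod_ite_le hη hz hz_half S P
    _ = C * (P ! * (Γ / z) ^ P * exp (2 * #S * η * z)) := by
        rw [div_pow, div_pow]
        ring

end SumPow

section TruncatedMoments

variable {d : ℕ}

lemma add_factorial_le (p r : ℕ) : ((p + r)! : ℝ) ≤ 2 ^ (p + r) * (p ! * r !) := by
  have choose_le := Nat.choose_le_two_pow (p + r) p
  have choose_mul := Nat.add_choose_mul_factorial_mul_factorial p r
  rw [← Nat.choose_symm_add] at choose_mul
  rify at choose_le choose_mul
  rw [← choose_mul, mul_assoc]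
  gcongr

lemma oraSymMean_prod_pow_le_of_pow_le (hd : 2 ≤ d) {x₀ : Fin d → ℝ} (hx₀ : ∑ i, x₀ i ^ 2 = 1)
    {t P r : ℕ} (hP : 100 * ((1 + r) * P) ≤ d) (ht : 4 * d * (((1 + r) * P : ℕ) * log d) ≤ t)
    {c : ℝ → ℝ} {w : ℕ → ℝ} (weight_nonneg : 0 ≤ w) (hc : ∀ a, 0 ≤ a → 0 ≤ c a)
    (hc_pow : ∀ a, 0 ≤ a → ∀ p, c a ^ p ≤ w p * a ^ (if p = 0 then 0 else p + r))
    {S : Finset (Fin d)} {κ : Fin d → ℕ} (hκ : κ ∈ S.piAntidiag P) :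
    oraSymMean t x₀ (∏ l ∈ S, (fun x : Fin d → ℝ => c (d * x l ^ 2)) ^ κ l) ≤
      2 * ∏ l ∈ S, w (κ l) * (16 ^ (if κ l = 0 then 0 else κ l + r) *
        ((if κ l = 0 then 0 else κ l + r)! : ℝ)) := by
  set α : Fin d → ℕ := fun l => if κ l = 0 then 0 else κ l + r
  have hα (l : Fin d) (hl : l ∉ S) : α l = 0 :=
    if_pos (not_not.1 (mt ((mem_piAntidiag.1 hκ).2 l) hl))
  have prod_univ_eq (g : Fin d → ℕ → ℝ) (hg : ∀ l, g l 0 = 1) :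
      ∏ l, g l (α l) = ∏ l ∈ S, g l (α l) :=
    (prod_subset (subset_univ S) fun l _ hl => by rw [hα l hl, hg]).symm
  have sum_α : ∑ l, α l ≤ (1 + r) * P := by
    rw [← sum_subset (subset_univ S) fun l _ => hα l, ← (mem_piAntidiag.1 hκ).1, mul_sum]
    refine sum_le_sum fun l _ => ?_
    simp only [α]
    split_ifs with h
    · positivity
    · nlinarith [Nat.pos_of_ne_zero h]
  calc oraSymMean t x₀ (∏ l ∈ S, (fun x : Fin d → ℝ => c (d * x l ^ 2)) ^ κ l)
      ≤ oraSymMean t x₀ ((∏ l ∈ S, w (κ l)) • fun x : Fin d → ℝ => ∏ l, (d * x l ^ 2) ^ α l) := by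
        refine oraSymMean_mono hx₀ t fun x _ => ?_
        rw [Finset.prod_apply, Pi.smul_apply, smul_eq_mul,
          prod_univ_eq (fun l p => (d * x l ^ 2) ^ p) (fun _ => pow_zero _), ← prod_mul_distrib]
        exact prod_le_prod (fun l _ => pow_nonneg (hc _ (by positivity)) _) fun l _ =>
          hc_pow _ (by positivity) _
    _ ≤ (∏ l ∈ S, w (κ l)) * (2 * ∏ l, (16 : ℝ) ^ α l * ((α l)! : ℝ)) := by
        rw [map_smul, smul_eq_mul]
        exact mul_le_mul_of_nonneg_left (oraSymMean_prod_pow_le hd hx₀ hP ht sum_α)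
          (prod_nonneg fun l _ => weight_nonneg _)
    _ = 2 * ∏ l ∈ S, w (κ l) * (16 ^ α l * ((α l)! : ℝ)) := by
        rw [prod_univ_eq (fun _ p => (16 : ℝ) ^ p * (p ! : ℝ)) (by simp),
          prod_mul_distrib (f := fun l => w (κ l))]
        ring

/-- The spare factor `a ^ r` in the bound for `c a ^ p` encodes that `c` is small near zero. It is
paid for with a small `W`, which then multiplies `#S` in the exponential. -/
lemma oraSymMean_sum_pow_le (hd : 2 ≤ d) {x₀ : Fin d → ℝ} (hx₀ : ∑ i, x₀ i ^ 2 = 1) {t P r : ℕ}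
    (hP : 100 * ((1 + r) * P) ≤ d) (ht : 4 * d * (((1 + r) * P : ℕ) * log d) ≤ t)
    {c : ℝ → ℝ} {W B z : ℝ} (hW : 0 ≤ W) (hB : 0 ≤ B) (hz : 0 < z) (hz_half : z ≤ 1 / 2)
    (hc : ∀ a, 0 ≤ a → 0 ≤ c a)
    (hc_pow : ∀ a, 0 ≤ a → ∀ p, p ≠ 0 → c a ^ p ≤ W * B ^ p * a ^ (p + r)) (S : Finset (Fin d)) :
    oraSymMean t x₀ (fun x => (∑ i ∈ S, c (d * x i ^ 2)) ^ P) ≤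
      2 * (P ! * (32 * B / z) ^ P * exp (2 * #S * (W * 32 ^ r * r !) * z)) := by
  set w : ℕ → ℝ := fun p => if p = 0 then 1 else W * B ^ p
  have weight_nonneg : 0 ≤ w := fun p => by simp only [w]; split_ifs <;> positivity
  have hc_pow' (a : ℝ) (ha : 0 ≤ a) (p : ℕ) :
      c a ^ p ≤ w p * a ^ (if p = 0 then 0 else p + r) := by
    simp only [w]
    split_ifs with h
    · simp [h]
    · exact hc_pow a ha p h
  have as_sum_pow : (fun x : Fin d → ℝ => (∑ i ∈ S, c (d * x i ^ 2)) ^ P) =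
      (∑ i ∈ S, fun x : Fin d → ℝ => c (d * x i ^ 2)) ^ P := by
    funext x
    simp
  rw [as_sum_pow]
  refine map_sum_pow_le _ _ S P zero_le_two (by positivity) (by positivity) hz hz_half fun κ hκ =>
    (oraSymMean_prod_pow_le_of_pow_le hd hx₀ hP ht weight_nonneg hc hc_pow' hκ).trans ?_
  refine mul_le_mul_of_nonneg_left
    (prod_le_prod (fun l _ => mul_nonneg (weight_nonneg _) (by positivity)) fun l _ => ?_)
    zero_le_two
  simp only [w]
  split_ifs with h
  · simp [h]
  · calc W * B ^ κ l * (16 ^ (κ l + r) * ((κ l + r)! : ℝ))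
        ≤ W * B ^ κ l * (16 ^ (κ l + r) * (2 ^ (κ l + r) * ((κ l)! * r !))) := by
          gcongr
          exact add_factorial_le _ _
      _ = W * 32 ^ r * r ! * ((32 * B) ^ κ l * (κ l)!) := by
          rw [show (32 : ℝ) = 16 * 2 by norm_num]
          simp only [mul_pow, pow_add]
          ring

end TruncatedMoments

/-! ### The walk and the random subset as integrals -/

section RandomSubset

lemma exists_perm_map_eq {ι : Type*} {S T : Finset ι} (h : #S = #T) :
    ∃ τ : Equiv.Perm ι, S.map τ.toEmbedding = T := by
  classical
  have := Set.powersetCard.isPretransitive (α := ι) (n := #T)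
  obtain ⟨τ, hτ⟩ := MulAction.exists_smul_eq (Equiv.Perm ι)
    (⟨S, h⟩ : Set.powersetCard ι #T) ⟨T, rfl⟩
  refine ⟨τ, ?_⟩
  rw [map_eq_image]
  exact congrArg Subtype.val hτ

lemma permMean_sum_eq_expect_powersetCard {ι : Type*} [Fintype ι] [DecidableEq ι] (g : ℝ → ℝ)
    (S₀ : Finset ι) (x : ι → ℝ) :
    permMean (fun y => g (∑ i ∈ S₀, y i)) x = 𝔼 S ∈ powersetCard #S₀ univ, g (∑ i ∈ S, x i) := by
  set f : Finset ι → (ι → ℝ) → ℝ := fun S y => g (∑ i ∈ S, y i)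
  set F : (ι → ℝ) → ℝ := fun y => 𝔼 S ∈ powersetCard #S₀ univ, f S y
  have f_comp_perm (S : Finset ι) (y : ι → ℝ) (τ : Equiv.Perm ι) :
      f S (y ∘ τ) = f (S.map τ.toEmbedding) y := by
    simp [f]
  have permMean_f {S : Finset ι} (hS : S ∈ powersetCard #S₀ univ) :
      permMean (f S) x = permMean (f S₀) x := by
    obtain ⟨τ, rfl⟩ := exists_perm_map_eq (mem_powersetCard.1 hS).2.symm
    rw [← permMean_comp_perm (f S₀) τ]
    simp only [f_comp_perm]
  have F_invariant (σ : Equiv.Perm ι) : F (x ∘ σ) = F x := by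
    simp only [F, f_comp_perm]
    exact expect_equiv σ.finsetCongr (by simp) fun S _ => rfl
  calc permMean (f S₀) x = 𝔼 S ∈ powersetCard #S₀ univ, permMean (f S) x := by
        rw [expect_congr rfl fun S hS => permMean_f hS, expect_const]
        exact powersetCard_nonempty.2 (card_le_univ _)
    _ = permMean F x := (expect_comm _ _ _).symm
    _ = F x := permMean_of_invariant F_invariant

end RandomSubset

section Integrals

lemma integral_uniformOn_finset {α : Type*} [Finite α] [MeasurableSpace α]
    [MeasurableSingletonClass α] (s : Finset α) (f : α → ℝ) :
    ∫ a, f a ∂ProbabilityTheory.uniformOn (s : Set α) = 𝔼 a ∈ s, f a := by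
  rw [ProbabilityTheory.uniformOn, ProbabilityTheory.cond, integral_smul_measure,
    setIntegral_finset _ Integrable.of_finite.integrableOn, Measure.count_apply_finset,
    expect_eq_sum_div_card, div_eq_inv_mul]
  simp

variable {d : ℕ}

lemma pairUniform_eq_uniformOn :
    pairUniform d =
      ProbabilityTheory.uniformOn ((univ.offDiag : Finset (Fin d × Fin d)) : Set _) := by
  have card_offDiag : d * (d - 1) = #(univ.offDiag : Finset (Fin d × Fin d)) := by
    rw [offDiag_card, card_univ, Fintype.card_fin, Nat.mul_sub_one]
  rw [ProbabilityTheory.uniformOn, ProbabilityTheory.cond, Measure.count_apply_finset, pairUniform,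
    card_offDiag]
  congr
  ext p
  simp

instance finsetDiscreteMeasurableSpace {α : Type*} : DiscreteMeasurableSpace (Finset α) :=
  ⟨fun _ => trivial⟩

lemma subsetUniform_eq_uniformOn (k : ℕ) :
    subsetUniform d k = ProbabilityTheory.uniformOn
      ((powersetCard k univ : Finset (Finset (Fin d))) : Set (Finset (Fin d))) := by
  have card_eq : d.choose k = #(powersetCard k (univ : Finset (Fin d))) := by
    rw [card_powersetCard, card_univ, Fintype.card_fin]
  rw [ProbabilityTheory.uniformOn, ProbabilityTheory.cond, Measure.count_apply_finset,
    subsetUniform, card_eq]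
  congr
  ext S
  simp

lemma oraMatrix_snoc {t : ℕ} (ω : Fin t → Fin d × Fin d) (p : Fin d × Fin d) :
    oraMatrix (Fin.snoc ω p : Fin (t + 1) → Fin d × Fin d) =
      rotM d p.1 p.2 (π / 4) * oraMatrix ω := by
  rw [oraMatrix, List.ofFn_succ']
  simp [oraMatrix]

lemma isProbabilityMeasure_pairUniform (hd : 2 ≤ d) : IsProbabilityMeasure (pairUniform d) := by
  rw [pairUniform_eq_uniformOn]
  exact ProbabilityTheory.isProbabilityMeasure_uniformOn (finite_toSet _)
    (coe_nonempty.2 (offDiag_univ_fin_nonempty hd))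

lemma isProbabilityMeasure_subsetUniform {k : ℕ} (hk : k ≤ d) :
    IsProbabilityMeasure (subsetUniform d k) := by
  rw [subsetUniform_eq_uniformOn]
  exact ProbabilityTheory.isProbabilityMeasure_uniformOn (finite_toSet _)
    (coe_nonempty.2 (powersetCard_nonempty.2 (by simpa using hk)))

lemma integral_oraMatrix_mulVec (hd : 2 ≤ d) (t : ℕ) (x₀ : Fin d → ℝ) (f : (Fin d → ℝ) → ℝ) :
    ∫ ω, f ((oraMatrix ω).mulVec x₀) ∂Measure.pi (fun _ : Fin t => pairUniform d) =
      (oraStep d ^ t) f x₀ := by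
  have := isProbabilityMeasure_pairUniform hd
  induction t generalizing f with
  | zero => simp [oraMatrix]
  | succ t ih =>
    have split_last := (measurePreserving_piFinSuccAbove (fun _ : Fin (t + 1) => pairUniform d)
      (Fin.last t)).symm
    rw [← split_last.integral_comp', integral_prod_symm _ .of_finite, pow_succ,
      Module.End.mul_apply, ← ih]
    congr 1 with ω
    rw [oraStep_apply, pairUniform_eq_uniformOn, integral_uniformOn_finset]
    refine expect_congr rfl fun p _ => ?_
    have append_last : (MeasurableEquiv.piFinSuccAbove (fun _ => Fin d × Fin d)
        (Fin.last t)).symm (p, ω) = Fin.snoc ω p := Fin.insertNth_last' p ω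
    rw [append_last, oraMatrix_snoc, Matrix.mulVec_mulVec]

lemma measure_oraMatrix_mulVec_sum_sq (hd : 2 ≤ d) (t : ℕ) (x₀ : Fin d → ℝ)
    (S₀ : Finset (Fin d)) (B : Set ℝ) :
    ((Measure.pi fun _ : Fin t => pairUniform d).prod (subsetUniform d #S₀))
        {z | ∑ i ∈ z.2, ((oraMatrix z.1).mulVec x₀ i) ^ 2 ∈ B} =
      ENNReal.ofReal (oraSymMean t x₀ fun x => B.indicator 1 (∑ i ∈ S₀, x i ^ 2)) := by
  have := isProbabilityMeasure_pairUniform hd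
  have := isProbabilityMeasure_subsetUniform (card_finset_fin_le S₀)
  have average_subset (x : Fin d → ℝ) :
      ∫ S, B.indicator 1 (∑ i ∈ S, x i ^ 2) ∂subsetUniform d #S₀ =
        permMean (fun y => B.indicator 1 (∑ i ∈ S₀, y i ^ 2)) x := by
    rw [subsetUniform_eq_uniformOn, integral_uniformOn_finset]
    exact (permMean_sum_eq_expect_powersetCard (B.indicator 1) S₀ fun i => x i ^ 2).symm
  rw [← ofReal_measureReal, ← integral_indicator_one .of_discrete, integral_prod _ .of_finite]
  exact congrArg ENNReal.ofReal ((integral_congr_ae (.of_forall fun ω => average_subset _)).trans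
    (integral_oraMatrix_mulVec hd t x₀ _))

end Integrals

/-! ### Concentration of the sum over a random subset -/

section Tail

variable {d : ℕ} {x₀ : Fin d → ℝ} {t P : ℕ} {M : ℝ}

lemma oraSymMean_sum_max_sub_pow_le (hd : 2 ≤ d) (hx₀ : ∑ i, x₀ i ^ 2 = 1) (hP : 300 * P ≤ d)
    (ht : 12 * d * (P * log d) ≤ t) (hM : 0 < M) (S : Finset (Fin d)) :
    oraSymMean t x₀ (fun x => (∑ i ∈ S, max (d * x i ^ 2 - M) 0) ^ P) ≤
      2 * (P ! * 64 ^ P * exp (2048 * #S / M ^ 2)) := by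
  have excess_pow_le {a : ℝ} (ha : 0 ≤ a) {p : ℕ} (hp : p ≠ 0) :
      max (a - M) 0 ^ p ≤ 1 / M ^ 2 * 1 ^ p * a ^ (p + 2) := by
    rcases le_total a M with haM | haM
    · rw [max_eq_right (sub_nonpos.2 haM), zero_pow hp]
      positivity
    · calc max (a - M) 0 ^ p ≤ a ^ p := by gcongr; exact max_le (by linarith) ha
        _ ≤ a ^ p * (a ^ 2 / M ^ 2) := le_mul_of_one_le_right (by positivity)
            ((one_le_div (by positivity)).2 (by gcongr))
        _ = 1 / M ^ 2 * 1 ^ p * a ^ (p + 2) := by rw [pow_add]; ring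
  have moment := oraSymMean_sum_pow_le hd hx₀ (t := t) (P := P) (r := 2) (by omega)
    (by push_cast; linarith) (W := 1 / M ^ 2) (B := 1) (z := 1 / 2) (by positivity) zero_le_one
    one_half_pos le_rfl (fun a _ => le_max_right (a - M) 0)
    (fun a ha p hp => excess_pow_le ha hp) S
  have exponent_eq : 2 * #S * (1 / M ^ 2 * 32 ^ 2 * 2 !) * (1 / 2) = 2048 * #S / M ^ 2 := by
    rw [Nat.factorial_two]
    push_cast
    ring
  have base_eq : (32 : ℝ) * 1 / (1 / 2) = 64 := by norm_num
  rwa [exponent_eq, base_eq] at moment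

lemma oraSymMean_sum_min_sq_pow_le (hd : 2 ≤ d) (hx₀ : ∑ i, x₀ i ^ 2 = 1) (hP : 200 * P ≤ d)
    (ht : 8 * d * (P * log d) ≤ t) (hM : 0 < M) {y : ℝ} (hy : 0 < y) (hMy : 64 * M * y ≤ 1)
    (S : Finset (Fin d)) :
    oraSymMean t x₀ (fun x => (∑ i ∈ S, min (d * x i ^ 2) M ^ 2) ^ P) ≤
      2 * (P ! * y⁻¹ ^ P * exp (2048 * #S * y)) := by
  have truncation_pow_le {a : ℝ} (ha : 0 ≤ a) {p : ℕ} (hp : p ≠ 0) :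
      (min a M ^ 2) ^ p ≤ 1 / M * M ^ p * a ^ (p + 1) := by
    obtain ⟨q, rfl⟩ := Nat.exists_eq_succ_of_ne_zero hp
    have : 0 ≤ min a M := le_min ha hM.le
    calc (min a M ^ 2) ^ (q + 1) = min a M ^ q * min a M ^ (q + 2) := by ring
      _ ≤ M ^ q * a ^ (q + 2) := by
        gcongr
        · exact min_le_right a M
        · exact min_le_left a M
      _ = 1 / M * M ^ (q + 1) * a ^ (q + 1 + 1) := by field_simp; ring
  have moment := oraSymMean_sum_pow_le hd hx₀ (t := t) (P := P) (r := 1) (by omega)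
    (by push_cast; linarith) (W := 1 / M) (B := M) (z := 32 * M * y) (by positivity) hM.le
    (by positivity) (by linarith) (fun a _ => sq_nonneg (min a M))
    (fun a ha p hp => truncation_pow_le ha hp) S
  refine moment.trans_eq ?_
  have scale_eq : 32 * M / (32 * M * y) = y⁻¹ := by field_simp
  have exponent_eq : 2 * #S * (1 / M * 32 ^ 1 * 1 !) * (32 * M * y) = 2048 * #S * y := by
    rw [Nat.factorial_one, Nat.cast_one]
    field_simp
    ring
  rw [scale_eq, exponent_eq]

lemma factorial_mul_pow_mul_exp_le {a u : ℝ} (ha : 0 ≤ a) (hPa : P * a ≤ exp (-1))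
    (hu : u ≤ P / 2) :
    P ! * a ^ P * exp u ≤ exp (-(P / 2)) := by
  calc P ! * a ^ P * exp u ≤ (P : ℝ) ^ P * a ^ P * exp (P / 2) := by
        gcongr
        exact_mod_cast Nat.factorial_le_pow P
    _ = (P * a) ^ P * exp (P / 2) := by rw [mul_pow]
    _ ≤ exp (-1) ^ P * exp (P / 2) := by gcongr
    _ = exp (-(P / 2)) := by rw [← exp_nat_mul, ← exp_add]; ring_nf

lemma oraSymMean_sum_max_sub_pow_div_le (hd : 2 ≤ d) (hx₀ : ∑ i, x₀ i ^ 2 = 1) (hP : 300 * P ≤ d)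
    (ht : 12 * d * (P * log d) ≤ t) (hM : 0 < M) {S : Finset (Fin d)} {δ : ℝ} (hSδ : 0 < #S * δ)
    (hPδ : 512 * P ≤ #S * δ) (hSM : 4096 * #S ≤ P * M ^ 2) :
    oraSymMean t x₀ (fun x => (∑ i ∈ S, max (d * x i ^ 2 - M) 0) ^ P) / (#S * δ) ^ P ≤
      2 * exp (-(P / 2)) := by
  calc oraSymMean t x₀ (fun x => (∑ i ∈ S, max (d * x i ^ 2 - M) 0) ^ P) / (#S * δ) ^ P
      ≤ 2 * (P ! * 64 ^ P * exp (2048 * #S / M ^ 2)) / (#S * δ) ^ P := by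
        gcongr
        exact oraSymMean_sum_max_sub_pow_le hd hx₀ hP ht hM S
    _ = 2 * (P ! * (64 / (#S * δ)) ^ P * exp (2048 * #S / M ^ 2)) := by rw [div_pow]; ring
    _ ≤ 2 * exp (-(P / 2)) := by
        gcongr
        refine factorial_mul_pow_mul_exp_le (by positivity) ?_ ?_
        · calc P * (64 / (#S * δ)) = 512 * P / (#S * δ) / 8 := by ring
            _ ≤ 1 / 8 := by gcongr; exact (div_le_one hSδ).2 hPδ
            _ ≤ exp (-1) := by linarith [exp_neg_one_gt_d9]
        · rw [div_le_iff₀ (by positivity)]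
          linarith

lemma oraSymMean_sum_min_sq_pow_div_le (hd : 2 ≤ d) (hx₀ : ∑ i, x₀ i ^ 2 = 1) (hP_pos : 0 < P)
    (hP : 200 * P ≤ d) (ht : 8 * d * (P * log d) ≤ t) (hM : 0 < M) {S : Finset (Fin d)}
    (hS : S.Nonempty) {K : ℝ} (hK : 2 ^ 15 ≤ K) (hPM : 512 * P * M ≤ #S * K) :
    oraSymMean t x₀ (fun x => (∑ i ∈ S, min (d * x i ^ 2) M ^ 2) ^ P) / (#S * K) ^ P ≤
      2 * exp (-(P / 2)) := by
  have K_pos : 0 < K := by linarith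
  have : (0 : ℝ) < #S := by exact_mod_cast hS.card_pos
  set y : ℝ := 8 * P / (#S * K) with y_eq
  have hMy : 64 * M * y ≤ 1 := by
    rw [y_eq, mul_div_assoc', div_le_one (by positivity)]
    linarith
  calc oraSymMean t x₀ (fun x => (∑ i ∈ S, min (d * x i ^ 2) M ^ 2) ^ P) / (#S * K) ^ P
      ≤ 2 * (P ! * y⁻¹ ^ P * exp (2048 * #S * y)) / (#S * K) ^ P := by
        gcongr
        exact oraSymMean_sum_min_sq_pow_le hd hx₀ hP ht hM (by positivity) hMy S
    _ = 2 * (P ! * (1 / (8 * P)) ^ P * exp (2048 * #S * y)) := by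
        have inv_y_div : y⁻¹ / (#S * K) = 1 / (8 * P) := by rw [y_eq]; field_simp
        rw [← inv_y_div, div_pow]
        ring
    _ ≤ 2 * exp (-(P / 2)) := by
        gcongr
        refine factorial_mul_pow_mul_exp_le (by positivity) ?_ ?_
        · calc P * (1 / (8 * P) : ℝ) = 1 / 8 := by field_simp
            _ ≤ exp (-1) := by linarith [exp_neg_one_gt_d9]
        · calc 2048 * #S * y = P / 2 * (2 ^ 15 / K) := by rw [y_eq]; field_simp; norm_num
            _ ≤ P / 2 := mul_le_of_le_one_right (by positivity) ((div_le_one K_pos).2 hK)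

lemma oraSymMean_indicator_sum_sq_notMem_Icc_le (hd : 2 ≤ d) (hx₀ : ∑ i, x₀ i ^ 2 = 1)
    {S : Finset (Fin d)} (hS : S.Nonempty) {ε K : ℝ} (hε : 0 < ε) (hM : 0 ≤ M) (hK : 0 < K)
    (hεM : ε * M ≤ 4 * K) :
    oraSymMean t x₀ (fun x => (Set.Icc ((1 - ε) * #S / d) ((1 + ε) * #S / d))ᶜ.indicator 1
        (∑ i ∈ S, x i ^ 2)) ≤
      2 * exp (-(#S * ε ^ 2 / (16 * K))) +
        oraSymMean t x₀ (fun x => (∑ i ∈ S, min (d * x i ^ 2) M ^ 2) ^ P) / (#S * K) ^ P +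
        oraSymMean t x₀ (fun x => (∑ i ∈ S, max (d * x i ^ 2 - M) 0) ^ P) /
          (#S * (ε / 2)) ^ P := by
  have hd_pos : (0 : ℝ) < d := by positivity
  set E : ℝ := 2 * exp (-(#S * ε ^ 2 / (16 * K)))
  let truncated : (Fin d → ℝ) → ℝ := fun x => (∑ i ∈ S, min (d * x i ^ 2) M ^ 2) ^ P
  let excess : (Fin d → ℝ) → ℝ := fun x => (∑ i ∈ S, max (d * x i ^ 2 - M) 0) ^ P
  have rescale (x : Fin d → ℝ) :
      (Set.Icc ((1 - ε) * #S / d) ((1 + ε) * #S / d))ᶜ.indicator (1 : ℝ → ℝ) (∑ i ∈ S, x i ^ 2) =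
        {y | ∑ i ∈ S, y i ∉ Set.Icc ((1 - ε) * #S) ((1 + ε) * #S)}.indicator
          (1 : (Fin d → ℝ) → ℝ) (fun i => d * x i ^ 2) := by
    simp only [Set.indicator_apply, Set.mem_compl_iff, Set.mem_Icc, Set.mem_ofPred_eq, ← mul_sum,
      div_le_iff₀' hd_pos, le_div_iff₀' hd_pos, Pi.one_apply]
  have permMean_bound {x : Fin d → ℝ} (hx : ∑ i, x i ^ 2 = 1) :
      permMean (fun x => (Set.Icc ((1 - ε) * #S / d) ((1 + ε) * #S / d))ᶜ.indicator 1
        (∑ i ∈ S, x i ^ 2)) x ≤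
      permMean ((fun _ => E) + ((#S * K) ^ P)⁻¹ • truncated +
        ((#S * (ε / 2)) ^ P)⁻¹ • excess) x := by
    have mean_eq_one : 𝔼 i, d * x i ^ 2 = 1 := by
      rw [expect_eq_sum_div_card, ← mul_sum, hx, card_univ, Fintype.card_fin, mul_one,
        div_self hd_pos.ne']
    have concentration := permMean_indicator_sum_notMem_Icc_le (fun i => by positivity)
      mean_eq_one hS hε hM hK hεM P
    simp only [div_pow, permMean_apply, ← expect_div] at concentration
    simp only [rescale, map_add, map_smul, Pi.add_apply, Pi.smul_apply, smul_eq_mul,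
      inv_mul_eq_div, permMean_of_invariant (f := fun _ => E) fun _ => rfl]
    exact concentration
  refine (oraSymMean_le_of_permMean_le hx₀ t fun x hx => permMean_bound hx).trans_eq ?_
  rw [map_add, map_add, map_smul, map_smul, oraSymMean_const hd, smul_eq_mul, smul_eq_mul,
    inv_mul_eq_div, inv_mul_eq_div]

lemma measure_oraMatrix_mulVec_sum_sq_notMem_Icc_le (hx₀ : ∑ i, x₀ i ^ 2 = 1) (hP : 0 < P)
    (ht : 12 * d * (P * log d) ≤ t) {S : Finset (Fin d)} {ε : ℝ} (hε : 0 < ε) (hε_le : ε ≤ 1)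
    (hS_lower : 2 ^ 19 * P ≤ #S * ε ^ 2) (hS_upper : #S * ε ^ 2 ≤ 2 ^ 22 * P) :
    ((Measure.pi fun _ : Fin t => pairUniform d).prod (subsetUniform d #S))
        {z | ∑ i ∈ z.2, ((oraMatrix z.1).mulVec x₀ i) ^ 2 ∉
          Set.Icc ((1 - ε) * #S / d) ((1 + ε) * #S / d)} ≤
      ENNReal.ofReal (6 * exp (-(P / 2))) := by
  have P_ge_one : (1 : ℝ) ≤ P := by exact_mod_cast hP
  have card_mul_sq_le : #S * ε ^ 2 ≤ #S * ε := by
    gcongr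
    exact pow_le_of_le_one hε.le hε_le two_ne_zero
  have card_mul_le : #S * ε ≤ #S := mul_le_of_le_one_right (by positivity) hε_le
  have card_pos : (0 : ℝ) < #S := by linarith
  have hS : S.Nonempty := Finset.card_pos.1 (by exact_mod_cast card_pos)
  have hP_le : 300 * P ≤ d := by
    have : (300 * P : ℝ) ≤ #S := by linarith
    exact le_trans (by exact_mod_cast this) (card_finset_fin_le S)
  have hd : 2 ≤ d := by omega
  set M : ℝ := 2 ^ 17 / ε with M_eq
  have M_pos : 0 < M := by positivity
  have deviation := oraSymMean_indicator_sum_sq_notMem_Icc_le hd hx₀ (t := t) (P := P) hS hε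
    M_pos.le (K := 2 ^ 15) (by positivity) (by rw [M_eq, mul_div_cancel₀ _ hε.ne']; norm_num)
  have gaussian_term : exp (-(#S * ε ^ 2 / (16 * 2 ^ 15))) ≤ exp (-(P / 2)) :=
    exp_le_exp.2 (by linarith)
  have truncated_term := oraSymMean_sum_min_sq_pow_div_le hd hx₀ hP (t := t) (by omega)
    (by linarith) M_pos hS le_rfl
    (by rw [M_eq, mul_div_assoc', div_le_iff₀ hε]; linarith)
  have excess_term := oraSymMean_sum_max_sub_pow_div_le hd hx₀ hP_le ht M_pos (S := S) (δ := ε / 2)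
    (by positivity) (by linarith)
    (by rw [M_eq, div_pow, mul_div_assoc', le_div_iff₀ (by positivity)]; linarith)
  refine (measure_oraMatrix_mulVec_sum_sq hd t x₀ S
    (Set.Icc ((1 - ε) * #S / d) ((1 + ε) * #S / d))ᶜ).trans_le (ENNReal.ofReal_le_ofReal ?_)
  linarith

end Tail

section Numerics

lemma half_le_log_natCast {n : ℕ} (hn : 2 ≤ n) : 1 / 2 ≤ log n :=
  calc 1 / 2 ≤ log 2 := by linarith [log_two_gt_d9]
    _ ≤ log n := log_le_log two_pos (by exact_mod_cast hn)

lemma ofReal_six_mul_exp_neg_half_le {n : ℕ} (hn : 2 ≤ n) {p : ℝ} (hp : 12 * log n ≤ p) :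
    ENNReal.ofReal (6 * exp (-(p / 2))) ≤ ((n : ℝ≥0∞) ^ 3)⁻¹ := by
  have n_pos : (0 : ℝ) < n := by positivity
  have six_le : (6 : ℝ) ≤ n ^ 3 := by
    calc (6 : ℝ) ≤ 2 ^ 3 := by norm_num
      _ ≤ n ^ 3 := by gcongr; exact_mod_cast hn
  have real_bound : 6 * exp (-(p / 2)) ≤ ((n : ℝ) ^ 3)⁻¹ := by
    calc 6 * exp (-(p / 2)) ≤ n ^ 3 * exp (-((6 : ℕ) * log n)) := by
          gcongr
          push_cast
          linarith
      _ = ((n : ℝ) ^ 3)⁻¹ := by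
          rw [exp_neg, exp_nat_mul, exp_log n_pos]
          field_simp
  refine (ENNReal.ofReal_le_ofReal real_bound).trans_eq ?_
  rw [ENNReal.ofReal_inv_of_pos (by positivity), ENNReal.ofReal_pow n_pos.le,
    ENNReal.ofReal_natCast]

lemma natCeil_mul_sq_bounds {ε a : ℝ} (hε : 0 < ε) (hε_le : ε ≤ 1) (ha : 1 ≤ a) :
    a ≤ ⌈a / ε ^ 2⌉₊ * ε ^ 2 ∧ ⌈a / ε ^ 2⌉₊ * ε ^ 2 ≤ 2 * a := by
  have sq_le : ε ^ 2 ≤ 1 := pow_le_one₀ hε.le hε_le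
  refine ⟨(div_le_iff₀ (by positivity)).1 (Nat.le_ceil _), ?_⟩
  calc ⌈a / ε ^ 2⌉₊ * ε ^ 2 ≤ (a / ε ^ 2 + 1) * ε ^ 2 := by
        gcongr
        exact (Nat.ceil_lt_add_one (by positivity)).le
    _ = a + ε ^ 2 := by field_simp
    _ ≤ 2 * a := by linarith

end Numerics

/-- **Lemma 4.6**: after `C d (log d)(log n)` steps of orthogonal repeated averaging, the sum
of the squares of the coordinates of the image of a fixed unit vector along a uniformly
random `k`-element subset, with `k = ⌈C' ε⁻² log n⌉`, is `(1 ± ε) k/d` except with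
probability `n⁻³`. -/
theorem ora_random_subset_concentration :
    ∃ C C' : ℝ, 0 < C ∧ 0 < C' ∧
      ∀ (n : ℕ), 2 ≤ n → ∀ ε : ℝ, 0 < ε → ε < 1 →
      ∀ (d : ℕ) (X₀ : Fin d → ℝ), (∑ i, X₀ i ^ 2 = 1) →
      ∀ t : ℕ, C * d * Real.log d * Real.log n ≤ t →
      ∀ k : ℕ, k = ⌈C' * ε⁻¹ ^ 2 * Real.log n⌉₊ → k ≤ d →
      ((Measure.pi fun _ : Fin t => pairUniform d).prod (subsetUniform d k))
          {z : (Fin t → Fin d × Fin d) × Finset (Fin d) |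
            ∑ i ∈ z.2, ((oraMatrix z.1).mulVec X₀ i) ^ 2 ∉
              Set.Icc ((1 - ε) * k / d) ((1 + ε) * k / d)} ≤
        (((n : ℝ≥0∞)) ^ 3)⁻¹ := by
  refine ⟨168, 2 ^ 23, by norm_num, by norm_num, ?_⟩
  intro n hn ε hε hε_lt d X₀ hX₀ t ht k hk hkd
  have log_n_ge := half_le_log_natCast hn
  set P : ℕ := ⌈12 * log n⌉₊
  have P_ge : 12 * log n ≤ P := Nat.le_ceil _
  have P_le : (P : ℝ) ≤ 14 * log n := by
    linarith [Nat.ceil_lt_add_one (show 0 ≤ 12 * log n by positivity)]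
  obtain ⟨k_lower, k_upper⟩ := natCeil_mul_sq_bounds hε hε_lt.le
    (show 1 ≤ 2 ^ 23 * log n by linarith)
  rw [show 2 ^ 23 * log n / ε ^ 2 = 2 ^ 23 * ε⁻¹ ^ 2 * log n by ring, ← hk] at k_lower k_upper
  obtain ⟨S₀, -, rfl⟩ := exists_subset_card_eq (hkd.trans_eq (card_fin d).symm)
  have steps_le : 12 * d * (P * log d) ≤ t := by
    calc 12 * d * (P * log d) ≤ 12 * d * (14 * log n * log d) := by gcongr
      _ = 168 * d * log d * log n := by ring
      _ ≤ t := ht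
  exact (measure_oraMatrix_mulVec_sum_sq_notMem_Icc_le hX₀ (Nat.ceil_pos.2 (by positivity))
    steps_le hε hε_lt.le (by linarith) (by linarith)).trans (ofReal_six_mul_exp_neg_half_le hn P_ge)

end KacJL
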